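/- Let G=(V,E) be a planar graph with terminal set T ⊆ V such that every pair of terminals in T is k-element-connected in G. Then G contains at least ⌈k/5⌉ − 1 pairwise element-disjoint Steiner trees spanning T; moreover, these trees can be chosen so that in each tree every non-terminal vertex has degree exactly 2. -/

import Mathlib

open SimpleGraph

/-- Two walks between the same pair of vertices are *element-disjoint* with respect to a
terminal set `T` if they share no edges and every common vertex is a terminal or an
endpoint. -/
def ElemDisjWalks {V : Type*} (T : Set V) {G : SimpleGraph V} {u v : V}
    (W₁ W₂ : G.Walk u v) : Prop :=
  (∀ e, e ∈ W₁.edges → e ∉ W₂.edges) ∧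
  (∀ x, x ∈ W₁.support → x ∈ W₂.support → x ∈ T ∪ {u, v})

/-- There exist `k` pairwise element-disjoint `u`-`v` paths in `G`
(with respect to the terminal set `T`). -/
def HasElemPaths {V : Type*} (G : SimpleGraph V) (T : Set V) (u v : V) (k : ℕ) : Prop :=
  ∃ P : Fin k → G.Walk u v, (∀ i, (P i).IsPath) ∧
    ∀ i j, i ≠ j → ElemDisjWalks T (P i) (P j)

/-- The element-connectivity `κ'_G(u,v)`: the maximum number of `u`-`v` paths that are
pairwise disjoint in edges and in non-terminal vertices. -/
noncomputable def elemConn {V : Type*} (G : SimpleGraph V) (T : Set V) (u v : V) : ℕ :=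
  sSup {k | HasElemPaths G T u v k}

/-- Two subgraphs, given as graphs on the same vertex set, are *element-disjoint* with
respect to the terminal set `T`: they share no edges and no non-terminal vertices. -/
def EDisj {V : Type*} (T : Set V) (H₁ H₂ : SimpleGraph V) : Prop :=
  Disjoint H₁.edgeSet H₂.edgeSet ∧ ∀ x, x ∈ H₁.support → x ∈ H₂.support → x ∈ T

/-- `H` is a Steiner tree of `G` for the terminal set `T`: a tree subgraph of `G`
containing all the terminals. -/
def IsSteinerTree {V : Type*} (G : SimpleGraph V) (T : Set V) (H : SimpleGraph V) : Prop :=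
  H ≤ G ∧ H.IsAcyclic ∧
    ∀ x ∈ H.support ∪ T, ∀ y ∈ H.support ∪ T, H.Reachable x y

/-- `H` is a Steiner forest of `G` for the terminal groups `T i`: a forest subgraph of
`G` in which each group lies entirely within a single tree of the forest. -/
def IsSteinerForest {V : Type*} {m : ℕ} (G : SimpleGraph V) (T : Fin m → Set V)
    (H : SimpleGraph V) : Prop :=
  H ≤ G ∧ H.IsAcyclic ∧ ∀ i, ∀ u ∈ T i, ∀ v ∈ T i, H.Reachable u v

/-- `G` has `H` as a minor: there are nonempty, pairwise-disjoint, connected branch sets,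
one for each vertex of `H`, with an edge of `G` between the branch sets of any two
adjacent vertices of `H`. -/
def HasMinor {V : Type*} {W : Type*} (G : SimpleGraph V) (H : SimpleGraph W) : Prop :=
  ∃ f : W → Set V,
    (∀ w, (f w).Nonempty) ∧
    (∀ w, (G.induce (f w)).Connected) ∧
    (∀ w₁ w₂, w₁ ≠ w₂ → Disjoint (f w₁) (f w₂)) ∧
    (∀ w₁ w₂, H.Adj w₁ w₂ → ∃ a ∈ f w₁, ∃ b ∈ f w₂, G.Adj a b)

/-- Planarity, via Wagner's theorem: a graph is planar iff it has neither a `K₅` minor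
nor a `K₃,₃` minor. -/
def IsPlanar {V : Type*} (G : SimpleGraph V) : Prop :=
  ¬ HasMinor G (completeGraph (Fin 5)) ∧
  ¬ HasMinor G (completeBipartiteGraph (Fin 3) (Fin 3))

/-!
Deleting or contracting an edge between two non-terminals preserves `k`-element-connectivity for
one of the two choices, by uncrossing element cuts. So `G` has a `k`-element-connected minor `M`
in which the non-terminals are independent and each terminal is its own branch set. Consider the
hypergraph on the terminals with one hyperedge per element of `M`. By matroid union, its
hyperedges can be coloured with `n` colours such that every colour class connects all terminals,
unless some partition of the terminals into `p` classes is crossed by fewer than `n (p - 1)`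
hyperedges. In the latter case the classes and the crossing non-terminals form a bipartite minor
with at most three times as many edges as vertices, by Mader's bound for graphs without a `K₅`
minor. As every class is crossed by at least `k` elements, this is impossible if `3 (n + 1) ≤ k`.
Finally, replace each coloured hyperedge by a path in `G` between two of its terminals, using only
the elements of `G` that it represents. A minimal connected subgraph for a colour then has all
non-terminal degrees equal to 2.
-/

/-! ### Minor models -/

section MinorModel

variable {V W U : Type*}

theorem spanningCoe_induce_adj {G : SimpleGraph V} {S : Set V} {a b : V} :
    (G.induce S).spanningCoe.Adj a b ↔ G.Adj a b ∧ a ∈ S ∧ b ∈ S := by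
  simp

theorem preconnected_induce_iff_reachable {G : SimpleGraph V} {S : Set V} :
    (G.induce S).Preconnected ↔
      ∀ a ∈ S, ∀ b ∈ S, (G.induce S).spanningCoe.Reachable a b := by
  refine ⟨fun h a ha b hb =>
    (h ⟨a, ha⟩ ⟨b, hb⟩).map (Embedding.spanningCoe (G.induce S)).toHom, ?_⟩
  rintro h ⟨a, ha⟩ ⟨b, hb⟩
  obtain ⟨w⟩ := h a ha b hb
  induction w with
  | nil => rfl
  | cons hadj _ ih =>
    obtain ⟨hGadj, -, hmem⟩ := spanningCoe_induce_adj.1 hadj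
    have hadj : (G.induce S).Adj ⟨_, ha⟩ ⟨_, hmem⟩ := hGadj
    exact hadj.reachable.trans (ih hmem hb)

theorem reachable_of_preconnected_induce {G : SimpleGraph V} {S S' : Set V}
    (h : (G.induce S).Preconnected) (hS : S ⊆ S') {a b : V} (ha : a ∈ S) (hb : b ∈ S) :
    (G.induce S').spanningCoe.Reachable a b :=
  (preconnected_induce_iff_reachable.1 h a ha b hb).mono fun x y hxy => by
    rw [spanningCoe_induce_adj] at hxy ⊢
    exact ⟨hxy.1, hS hxy.2.1, hS hxy.2.2⟩

/-- A model of the graph `H` in the graph `G`: pairwise disjoint connected branch sets, adjacent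
whenever the vertices of `H` that they represent are adjacent. Unlike in `HasMinor`, branch sets
may be empty, so that isolated vertices of `H` need not be represented. -/
structure IsMinorModel (G : SimpleGraph V) (H : SimpleGraph W) (B : W → Set V) : Prop where
  disjoint : Pairwise fun w₁ w₂ => Disjoint (B w₁) (B w₂)
  preconnected : ∀ w, (G.induce (B w)).Preconnected
  exists_adj : ∀ w₁ w₂, H.Adj w₁ w₂ → ∃ a ∈ B w₁, ∃ b ∈ B w₂, G.Adj a b

theorem hasMinor_iff_exists_isMinorModel {G : SimpleGraph V} {H : SimpleGraph W} :
    HasMinor G H ↔ ∃ B, IsMinorModel G H B ∧ ∀ w, (B w).Nonempty := by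
  refine ⟨?_, ?_⟩
  · rintro ⟨B, hne, hconn, hdisj, hadj⟩
    exact ⟨B, ⟨fun _ _ => hdisj _ _, fun w => (hconn w).preconnected, hadj⟩, hne⟩
  · rintro ⟨B, ⟨hdisj, hconn, hadj⟩, hne⟩
    have (w : W) : Nonempty (B w) := (hne w).to_subtype
    exact ⟨B, hne, fun w => ⟨hconn w⟩, fun _ _ h => hdisj h, hadj⟩

theorem isMinorModel_singleton (G : SimpleGraph V) {H : SimpleGraph W} (f : W ↪ V)
    (h : ∀ a b, H.Adj a b → G.Adj (f a) (f b)) : IsMinorModel G H fun w => {f w} where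
  disjoint _ _ hne := Set.disjoint_singleton.2 (f.injective.ne hne)
  preconnected _ := Preconnected.of_subsingleton
  exists_adj _ _ hadj := ⟨_, rfl, _, rfl, h _ _ hadj⟩

theorem isMinorModel_of_le {G H : SimpleGraph V} (h : H ≤ G) : IsMinorModel G H fun v => {v} :=
  isMinorModel_singleton G (.refl V) fun _ _ hadj => h hadj

theorem isMinorModel_map (G : SimpleGraph V) (φ : V → W)
    (hφ : ∀ w, (G.induce (φ ⁻¹' {w})).Preconnected) :
    IsMinorModel G (G.map φ) fun w => φ ⁻¹' {w} where
  disjoint _ _ hne := (Set.disjoint_singleton.2 hne).preimage φ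
  preconnected := hφ
  exists_adj := by
    rintro _ _ ⟨-, u, v, hadj, rfl, rfl⟩
    exact ⟨u, rfl, v, rfl, hadj⟩

theorem IsMinorModel.trans {G : SimpleGraph V} {H : SimpleGraph W} {K : SimpleGraph U}
    {B : W → Set V} {C : U → Set W} (hB : IsMinorModel G H B) (hC : IsMinorModel H K C) :
    IsMinorModel G K fun u => ⋃ w ∈ C u, B w where
  disjoint u u' hne := by
    simp only [Set.disjoint_iUnion_left, Set.disjoint_iUnion_right]
    intro w' hw' w hw
    exact hB.disjoint fun h => Set.disjoint_left.1 (hC.disjoint hne) hw (h ▸ hw')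
  preconnected u := by
    rw [preconnected_induce_iff_reachable]
    simp only [Set.mem_iUnion]
    rintro a ⟨w, hw, ha⟩ b ⟨w', hw', hb⟩
    have within {x : W} (hx : x ∈ C u) {a b : V} (ha : a ∈ B x) (hb : b ∈ B x) :=
      reachable_of_preconnected_induce (hB.preconnected x)
        (Set.subset_biUnion_of_mem (u := B) hx) ha hb
    obtain ⟨p⟩ := preconnected_induce_iff_reachable.1 (hC.preconnected u) w hw w' hw'
    induction p generalizing a with
    | nil => exact within hw ha hb
    | cons hadj _ ih =>
      obtain ⟨hHadj, -, hx⟩ := spanningCoe_induce_adj.1 hadj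
      obtain ⟨c, hc, d, hd, hcd⟩ := hB.exists_adj _ _ hHadj
      refine (within hw ha hc).trans (.trans (Adj.reachable ?_) (ih d hx hd hw' hb))
      exact spanningCoe_induce_adj.2 ⟨hcd, Set.mem_biUnion hw hc, Set.mem_biUnion hx hd⟩
  exists_adj u u' hadj := by
    obtain ⟨w, hw, w', hw', hww⟩ := hC.exists_adj u u' hadj
    obtain ⟨a, ha, b, hb, hab⟩ := hB.exists_adj w w' hww
    exact ⟨a, Set.mem_biUnion hw ha, b, Set.mem_biUnion hw' hb, hab⟩

theorem IsMinorModel.hasMinor_completeGraph {G : SimpleGraph V} [Nontrivial W] {B : W → Set V}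
    (hB : IsMinorModel G (completeGraph W) B) : HasMinor G (completeGraph W) := by
  refine hasMinor_iff_exists_isMinorModel.2 ⟨B, hB, fun w => ?_⟩
  obtain ⟨w', hw'⟩ := exists_ne w
  obtain ⟨a, ha, -⟩ := hB.exists_adj w w' hw'.symm
  exact ⟨a, ha⟩

theorem IsMinorModel.hasMinor_completeGraph_of_hasMinor {G : SimpleGraph V} {H : SimpleGraph W}
    [Nontrivial U] {B : W → Set V} (hB : IsMinorModel G H B)
    (h : HasMinor H (completeGraph U)) : HasMinor G (completeGraph U) := by
  obtain ⟨C, hC, -⟩ := hasMinor_iff_exists_isMinorModel.1 h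
  exact (hB.trans hC).hasMinor_completeGraph

open Classical in
/-- The contraction of `q` into `p`. The vertex type is kept, and `q` becomes isolated. -/
noncomputable def contract (G : SimpleGraph V) (p q : V) : SimpleGraph V :=
  G.map (Function.update id q p)

theorem contract_adj {G : SimpleGraph V} {p q : V} (hpq : p ≠ q) {a b : V} :
    (contract G p q).Adj a b ↔ a ≠ b ∧ a ≠ q ∧ b ≠ q ∧
      (G.Adj a b ∨ (a = p ∧ G.Adj q b) ∨ (b = p ∧ G.Adj a q)) := by
  classical
  simp only [contract, map_adj', Function.update_apply, id_eq]
  constructor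
  · rintro ⟨hab, u, v, huv, rfl, rfl⟩
    grind
  · rintro ⟨hab, ha, hb, h | ⟨rfl, h⟩ | ⟨rfl, h⟩⟩
    · exact ⟨hab, a, b, h, by simp [ha, hb]⟩
    · exact ⟨hab, q, b, h, by simp [hb]⟩
    · exact ⟨hab, a, q, h, by simp [ha]⟩

theorem isMinorModel_contract {G : SimpleGraph V} {p q : V} (hpq : G.Adj p q) :
    ∃ B : V → Set V, IsMinorModel G (contract G p q) B ∧ ∀ x, x ≠ p → x ≠ q → B x = {x} := by
  classical
  have fiber (x : V) (hx : x ≠ p) : Function.update id q p ⁻¹' {x} = {x} \ {q} := by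
    ext y
    simp only [Set.mem_preimage, Function.update_apply, Set.mem_sdiff, Set.mem_singleton_iff]
    grind
  refine ⟨_, isMinorModel_map G _ fun x => ?_, fun x hxp hxq => by rw [fiber x hxp]; grind⟩
  by_cases hx : x = p
  · have : Function.update id q p ⁻¹' {x} = {p, q} := by
      ext y
      simp only [Set.mem_preimage, Function.update_apply, Set.mem_insert_iff,
        Set.mem_singleton_iff]
      grind
    rw [this]
    exact (induce_pair_connected_of_adj hpq).preconnected
  · rw [fiber x hx]
    have : Subsingleton ↥({x} \ {q} : Set V) :=
      (Set.subsingleton_singleton.anti Set.sdiff_subset).coe_sort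
    exact Preconnected.of_subsingleton

end MinorModel

/-! ### Mader's edge bound -/

universe u

section EdgeBound

variable {V : Type*}

theorem sum_ncard_neighborSet [Fintype V] (Q : SimpleGraph V) :
    ∑ v, (Q.neighborSet v).ncard = 2 * Q.edgeSet.ncard := by
  classical
  rw [← coe_edgeFinset, Set.ncard_coe_finset, ← sum_degrees_eq_twice_card_edges]
  exact Finset.sum_congr rfl fun v _ => Set.ncard_eq_toFinset_card' _

theorem mul_ncard_le_two_mul_ncard_edgeSet [Finite V] {Q : SimpleGraph V} {S : Set V} {d : ℕ}
    (h : ∀ v ∈ S, d ≤ (Q.neighborSet v).ncard) : d * S.ncard ≤ 2 * Q.edgeSet.ncard := by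
  classical
  have := Fintype.ofFinite V
  rw [← sum_ncard_neighborSet, mul_comm, ← smul_eq_mul, Set.ncard_eq_toFinset_card']
  refine (Finset.card_nsmul_le_sum _ _ _ fun v hv => h v (Set.mem_toFinset.1 hv)).trans ?_
  exact Finset.sum_le_sum_of_subset (Finset.subset_univ _)

theorem ncard_edgeSet_le_choose_two [Finite V] {Q : SimpleGraph V} {n : ℕ}
    (hn : Q.support.ncard ≤ n) : Q.edgeSet.ncard ≤ n.choose 2 := by
  classical
  have := Fintype.ofFinite V
  rw [← coe_edgeFinset, Set.ncard_coe_finset,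
    ← card_edgeFinset_induce_of_support_subset subset_rfl]
  refine card_edgeFinset_le_card_choose_two.trans (Nat.choose_le_choose 2 ?_)
  rwa [← Nat.card_eq_fintype_card, Nat.card_coe_set_eq]

theorem support_contract_subset (Q : SimpleGraph V) {p q : V} (hpq : Q.Adj p q) :
    (contract Q p q).support ⊆ Q.support \ {q} := by
  rintro a ⟨b, hab⟩
  obtain ⟨-, haq, -, h | ⟨rfl, -⟩ | ⟨-, h⟩⟩ := (contract_adj hpq.ne).1 hab
  exacts [⟨⟨b, h⟩, haq⟩, ⟨⟨q, hpq⟩, haq⟩, ⟨⟨q, h⟩, haq⟩]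

theorem ncard_edgeSet_contract_lt [Finite V] {Q : SimpleGraph V} {p q : V} (hpq : Q.Adj p q) :
    (contract Q p q).edgeSet.ncard < Q.edgeSet.ncard := by
  classical
  refine lt_of_le_of_lt ?_ (Set.ncard_sdiff_singleton_lt_of_mem (a := s(p, q)) hpq)
  refine (Set.ncard_le_ncard (t := Sym2.map (Function.update id q p) '' (Q.edgeSet \ {s(p, q)}))
    ?_).trans (Set.ncard_image_le (Set.toFinite _))
  refine Sym2.ind fun a b hab => ?_
  obtain ⟨hne, u, v, huv, rfl, rfl⟩ := hab
  refine ⟨s(u, v), ⟨huv, fun h => hne ?_⟩, rfl⟩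
  simp only [Set.mem_singleton_iff, Sym2.eq_iff] at h
  obtain ⟨rfl, rfl⟩ | ⟨rfl, rfl⟩ := h <;> simp [Function.update_apply]

theorem ncard_edgeSet_le_contract [Finite V] (Q : SimpleGraph V) {p q : V} (hpq : p ≠ q) :
    Q.edgeSet.ncard ≤ (contract Q p q).edgeSet.ncard + (Q.commonNeighbors p q).ncard + 1 := by
  classical
  set lost : Set (Sym2 V) := insert s(p, q) ((s(q, ·)) '' Q.commonNeighbors p q)
  have hlost : lost.ncard ≤ (Q.commonNeighbors p q).ncard + 1 :=
    (Set.ncard_insert_le _ _).trans (Nat.add_le_add_right (Set.ncard_image_le (Set.toFinite _)) 1)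
  have hkept : (Q.edgeSet \ lost).ncard ≤ (contract Q p q).edgeSet.ncard := by
    have mem_kept {a b : V} (h : s(a, b) ∈ Q.edgeSet \ lost) : Q.Adj a b ∧
        (a = q → b ≠ p ∧ ¬ Q.Adj p b) ∧ (b = q → a ≠ p ∧ ¬ Q.Adj p a) := by
      simp only [lost, Set.mem_sdiff, mem_edgeSet, Set.mem_insert_iff, Set.mem_image,
        mem_commonNeighbors, Sym2.eq_iff, not_or, not_exists, not_and] at h
      grind [SimpleGraph.adj_comm]
    refine Set.ncard_le_ncard_of_injOn (Sym2.map (Function.update id q p)) ?_ ?_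
    · refine Sym2.ind fun a b h => ?_
      obtain ⟨hab, ha, hb⟩ := mem_kept h
      simp only [Sym2.map_mk, mem_edgeSet, contract_adj hpq, Function.update_apply, id_eq]
      grind [hab.ne]
    · refine Sym2.ind fun a b h => Sym2.ind fun c d h' heq => ?_
      have hab := mem_kept h
      have hcd := mem_kept h'
      simp only [Sym2.map_mk, Function.update_apply, id_eq, Sym2.eq_iff] at heq ⊢
      clear mem_kept h h'
      grind [hab.1.ne, hcd.1.ne, hab.1.symm, hcd.1.symm]
  have := Set.ncard_le_ncard_sdiff_add_ncard Q.edgeSet lost (Set.toFinite _)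
  omega

theorem IsMinorModel.hasMinor_completeGraph_cons {Q : SimpleGraph V} {x : V} {m : ℕ}
    {B : Fin m → Set V} (hB : IsMinorModel Q (completeGraph (Fin m)) B)
    (hne : ∀ w, (B w).Nonempty) (hsub : ∀ w, B w ⊆ Q.neighborSet x) :
    HasMinor Q (completeGraph (Fin (m + 1))) := by
  refine hasMinor_iff_exists_isMinorModel.2
    ⟨(Fin.cons {x} B : Fin (m + 1) → Set V), ⟨?_, ?_, ?_⟩, ?_⟩
  · have hx (w : Fin m) : x ∉ B w := fun h => (hsub w h).ne rfl
    intro i j hij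
    induction i using Fin.cases <;> induction j using Fin.cases
    · exact absurd rfl hij
    · simpa using hx _
    · simpa using hx _
    · exact hB.disjoint (by simpa using hij)
  · intro i
    induction i using Fin.cases
    · exact Preconnected.of_subsingleton (V := ({x} : Set V))
    · exact hB.preconnected _
  · intro i j hij
    induction i using Fin.cases with
    | zero =>
      induction j using Fin.cases with
      | zero => exact absurd rfl hij
      | succ j => exact ⟨x, rfl, (hne j).some, (hne j).some_mem, hsub j (hne j).some_mem⟩
    | succ i =>
      induction j using Fin.cases with
      | zero => exact ⟨(hne i).some, (hne i).some_mem, x, rfl, (hsub i (hne i).some_mem).symm⟩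
      | succ j => exact hB.exists_adj i j (by simpa using hij)
  · intro i
    induction i using Fin.cases
    · exact Set.singleton_nonempty x
    · exact hne _

theorem HasMinor.completeGraph_succ_of_induce_neighborSet {Q : SimpleGraph V} {x : V} {m : ℕ}
    (h : HasMinor (Q.induce (Q.neighborSet x)) (completeGraph (Fin m))) :
    HasMinor Q (completeGraph (Fin (m + 1))) := by
  obtain ⟨C, hC, hne⟩ := hasMinor_iff_exists_isMinorModel.1 h
  have hmodel := isMinorModel_singleton Q (H := Q.induce (Q.neighborSet x))
    (Function.Embedding.subtype _) fun _ _ h => h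
  refine (hmodel.trans hC).hasMinor_completeGraph_cons (x := x) (fun w => ?_) fun w => ?_
  · obtain ⟨y, hy⟩ := hne w
    exact ⟨y, Set.mem_biUnion hy rfl⟩
  · exact Set.iUnion₂_subset fun y _ => Set.singleton_subset_iff.2 y.2

theorem choose_two_add_succ_choose_two (c : ℕ) : c.choose 2 + (c + 1).choose 2 = c * c := by
  induction c with
  | zero => rfl
  | succ c ih =>
    have := Nat.choose_succ_succ' c 1
    have := Nat.choose_succ_succ' (c + 1) 1
    simp only [Nat.choose_one_right] at *
    nlinarith

theorem lt_of_mul_lt_ncard_edgeSet_add_choose_two [Finite V] {c n : ℕ} {Q : SimpleGraph V}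
    (hcn : c ≤ n) (hn : Q.support.ncard ≤ n) (he : c * n < Q.edgeSet.ncard + (c + 1).choose 2) :
    c < n := by
  refine hcn.lt_of_ne ?_
  rintro rfl
  have := ncard_edgeSet_le_choose_two hn
  have := choose_two_add_succ_choose_two c
  omega

/-- A graph exceeding by exactly one the edge bound `c n - (c + 1).choose 2` in which each edge
lies in at least `c` triangles. Every graph exceeding the bound has a minor of this form. -/
structure IsMaderCore (c : ℕ) (R : SimpleGraph V) : Prop where
  lt_ncard_support : c < R.support.ncard
  ncard_edgeSet_add_choose_two : R.edgeSet.ncard + (c + 1).choose 2 = c * R.support.ncard + 1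
  le_ncard_commonNeighbors : ∀ p q, R.Adj p q → c ≤ (R.commonNeighbors p q).ncard

theorem exists_isMinorModel_isMaderCore [Finite V] {c n : ℕ} {Q : SimpleGraph V}
    (hcn : c ≤ n) (hn : Q.support.ncard ≤ n) (he : c * n < Q.edgeSet.ncard + (c + 1).choose 2) :
    ∃ (R : SimpleGraph V) (B : V → Set V), IsMinorModel Q R B ∧ IsMaderCore c R := by
  induction hN : n + Q.edgeSet.ncard using Nat.strong_induction_on generalizing n Q with
  | _ N ih =>
  subst hN
  have hc_lt := lt_of_mul_lt_ncard_edgeSet_add_choose_two hcn hn he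
  have of_model {H : SimpleGraph V} {B : V → Set V} {m : ℕ} (hH : IsMinorModel Q H B)
      (hlt : m + H.edgeSet.ncard < n + Q.edgeSet.ncard) (hcm : c ≤ m)
      (hm : H.support.ncard ≤ m) (he : c * m < H.edgeSet.ncard + (c + 1).choose 2) :
      ∃ (R : SimpleGraph V) (B : V → Set V), IsMinorModel Q R B ∧ IsMaderCore c R := by
    obtain ⟨R', B', hR', h⟩ := ih _ hlt hcm hm he rfl
    exact ⟨R', _, hH.trans hR', h⟩
  obtain ⟨m, rfl⟩ := Nat.exists_eq_add_one_of_ne_zero (Nat.ne_zero_of_lt hc_lt)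
  have : c * (m + 1) = c * m + c := Nat.mul_succ c m
  by_cases hsupp : Q.support.ncard ≤ m
  · exact of_model (isMinorModel_of_le le_rfl) (by omega) (by omega) hsupp (by omega)
  by_cases hcommon : ∃ p q, Q.Adj p q ∧ (Q.commonNeighbors p q).ncard < c
  · obtain ⟨p, q, hpq, hlt⟩ := hcommon
    obtain ⟨B, hB, -⟩ := isMinorModel_contract hpq
    have hlt' := ncard_edgeSet_contract_lt hpq
    have hle := ncard_edgeSet_le_contract Q hpq.ne
    have hsub := Set.ncard_le_ncard (support_contract_subset Q hpq)
    rw [Set.ncard_sdiff_singleton_of_mem (show q ∈ Q.support from ⟨p, hpq.symm⟩)] at hsub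
    exact of_model (m := m) hB (by omega) (by omega) (by omega) (by omega)
  by_cases hdense : c * (m + 1) + 1 < Q.edgeSet.ncard + (c + 1).choose 2
  · obtain ⟨e, heQ⟩ : Q.edgeSet.Nonempty := by
      obtain ⟨a, ⟨b, hab⟩⟩ := Set.nonempty_of_ncard_ne_zero (s := Q.support) (by omega)
      exact ⟨s(a, b), hab⟩
    have hcard : (Q.deleteEdges {e}).edgeSet.ncard + 1 = Q.edgeSet.ncard := by
      rw [edgeSet_deleteEdges, Set.ncard_sdiff_singleton_add_one heQ]
    have hle : Q.deleteEdges {e} ≤ Q := deleteEdges_le {e}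
    exact of_model (isMinorModel_of_le hle) (by omega) (by omega)
      ((Set.ncard_le_ncard (support_mono hle)).trans hn) (by omega)
  · push Not at hcommon
    have hsupp_eq : Q.support.ncard = m + 1 := by omega
    exact ⟨Q, _, isMinorModel_of_le le_rfl, by omega, by rw [hsupp_eq]; omega, hcommon⟩

theorem ncard_neighborSet_induce_neighborSet (Q : SimpleGraph V) (x : V) (v : Q.neighborSet x) :
    ((Q.induce (Q.neighborSet x)).neighborSet v).ncard = (Q.commonNeighbors x v).ncard := by
  rw [← Set.ncard_image_of_injective _ Subtype.val_injective]
  congr 1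
  ext z
  simp [mem_commonNeighbors, and_comm]

theorem exists_ncard_neighborSet_lt [Finite V] {Q : SimpleGraph V} {d : ℕ}
    (h : 2 * Q.edgeSet.ncard < d * Q.support.ncard) :
    ∃ x ∈ Q.support, (Q.neighborSet x).ncard < d := by
  by_contra! hle
  exact h.not_ge (mul_ncard_le_two_mul_ncard_edgeSet hle)

theorem hasMinor_completeGraph_of_lt_ncard_edgeSet {c : ℕ} (hc : c ≤ 3) {V : Type u} [Finite V]
    {Q : SimpleGraph V} {n : ℕ} (hcn : c ≤ n) (hn : Q.support.ncard ≤ n)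
    (he : c * n < Q.edgeSet.ncard + (c + 1).choose 2) :
    HasMinor Q (completeGraph (Fin (c + 2))) := by
  induction c generalizing V n with
  | zero =>
    obtain ⟨⟨a, b⟩, hab⟩ := Set.nonempty_of_ncard_ne_zero (s := Q.edgeSet) (by simpa using he.ne')
    have hab : Q.Adj a b := hab
    refine (isMinorModel_singleton Q ⟨![a, b], ?_⟩ ?_).hasMinor_completeGraph
    · intro i j hij
      fin_cases i <;> fin_cases j <;> simp_all [hab.ne, hab.ne']
    · intro i j hij
      fin_cases i <;> fin_cases j
      exacts [absurd rfl hij, hab, hab.symm, absurd rfl hij]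
  | succ c ih =>
    obtain ⟨R, B, hB, hlt, heq, hcommon⟩ := exists_isMinorModel_isMaderCore hcn hn he
    refine hB.hasMinor_completeGraph_of_hasMinor ?_
    obtain ⟨x, ⟨y, hxy⟩, hx⟩ :
        ∃ x ∈ R.support, c ≠ 0 → (R.neighborSet x).ncard < 2 * (c + 1) := by
      by_cases hc0 : c = 0
      · obtain ⟨x, hx⟩ := Set.nonempty_of_ncard_ne_zero (Nat.ne_zero_of_lt hlt)
        exact ⟨x, hx, absurd hc0⟩
      · have := Nat.choose_le_choose 2 (show 3 ≤ c + 1 + 1 by omega)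
        rw [show Nat.choose 3 2 = 3 from rfl] at this
        obtain ⟨x, hx⟩ := exists_ncard_neighborSet_lt (d := 2 * (c + 1)) (Q := R)
          (by rw [mul_assoc]; omega)
        exact ⟨x, hx.1, fun _ => hx.2⟩
    have hdeg (v : R.neighborSet x) : c + 1 ≤ ((R.induce (R.neighborSet x)).neighborSet v).ncard :=
      (hcommon x v v.2).trans_eq (ncard_neighborSet_induce_neighborSet R x v).symm
    have hle := mul_ncard_le_two_mul_ncard_edgeSet fun v (_ : v ∈ Set.univ) => hdeg v
    rw [Set.ncard_univ, Nat.card_coe_set_eq] at hle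
    have hn : (R.induce (R.neighborSet x)).support.ncard ≤ (R.neighborSet x).ncard :=
      Set.ncard_le_card _
    have hcd : c < (R.neighborSet x).ncard :=
      ((hdeg ⟨y, hxy⟩).trans (Set.ncard_le_card _)).trans_eq (Nat.card_coe_set_eq _)
    refine (ih (by omega) hcd.le hn ?_).completeGraph_succ_of_induce_neighborSet
    have hc : c ≤ 2 := by omega
    interval_cases c <;> simp only [Nat.reduceAdd, Nat.choose] at heq ⊢ <;> omega

theorem ncard_edgeSet_le_three_mul [Finite V] {Q : SimpleGraph V}
    (hQ : ¬ HasMinor Q (completeGraph (Fin 5))) : Q.edgeSet.ncard ≤ 3 * Nat.card V := by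
  have hn : Q.support.ncard ≤ Nat.card V := Set.ncard_le_card _
  by_contra! hlt
  by_cases hV : 3 ≤ Nat.card V
  · exact hQ (hasMinor_completeGraph_of_lt_ncard_edgeSet le_rfl hV hn (by omega))
  · have := ncard_edgeSet_le_choose_two hn
    interval_cases Nat.card V <;> simp only [Nat.choose] at this <;> omega

end EdgeBound

/-! ### Matroid union for linear matroids -/

section Span

variable {K E ι : Type*} [Field K] [AddCommGroup E] [Module K E]

theorem mem_span_image_inter_of_mem_span_image_sdiff {v : ι → E} {S : Set ι}
    (hS : LinearIndepOn K v S) (A : Set ι) {x : E} (hx : x ∈ Submodule.span K (v '' S))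
    (h : ∀ u ∈ S, u ∉ A → x ∈ Submodule.span K (v '' (S \ {u}))) :
    x ∈ Submodule.span K (v '' (S ∩ A)) := by
  obtain ⟨l, hl, rfl⟩ := (Finsupp.mem_span_image_iff_linearCombination K).1 hx
  refine (Finsupp.mem_span_image_iff_linearCombination K).2 ⟨l, fun u hu => ⟨hl hu, ?_⟩, rfl⟩
  by_contra huA
  obtain ⟨l', hl', heq⟩ := (Finsupp.mem_span_image_iff_linearCombination K).1 (h u (hl hu) huA)
  have hll' : l' = l :=
    linearIndepOn_iffₛ.1 hS l' (Finsupp.supported_mono Set.sdiff_subset hl') l hl heq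
  exact (hl' (hll' ▸ hu)).2 rfl

theorem span_insert_eq_span_insert_of_mem_of_notMem {x y : E} {s : Set E}
    (hx : x ∈ Submodule.span K (insert y s)) (hxs : x ∉ Submodule.span K s) :
    Submodule.span K (insert x s) = Submodule.span K (insert y s) := by
  apply le_antisymm <;>
    rw [Submodule.span_le, Set.insert_subset_iff]
  · exact ⟨hx, (Set.subset_insert _ _).trans Submodule.subset_span⟩
  · exact ⟨mem_span_insert_exchange hx hxs, (Set.subset_insert _ _).trans Submodule.subset_span⟩

end Span

section MatroidUnion

variable {ι J E : Type*}

/-- A partial colouring of the index type `ι` with colours in `J`, together with a vector for each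
index. The vectors of uncoloured indices carry no meaning. -/
structure ColoredVectors (ι J E : Type*) where
  col : ι → Option J
  vec : ι → E

namespace ColoredVectors

/-- The colour class of `j`. -/
def cls (s : ColoredVectors ι J E) (j : J) : Set ι := {i | s.col i = some j}

/-- The set of uncoloured indices. -/
def uncolored (s : ColoredVectors ι J E) : Set ι := {i | s.col i = none}

open Classical in
/-- Remove the colour of the index `u`. -/
noncomputable def erase (s : ColoredVectors ι J E) (u : ι) : ColoredVectors ι J E where
  col := Function.update s.col u none
  vec := s.vec

open Classical in
/-- Give the colour `j` and the vector `x` to the index `w`. -/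
noncomputable def assign (s : ColoredVectors ι J E) (w : ι) (j : J) (x : E) :
    ColoredVectors ι J E where
  col := Function.update s.col w (some j)
  vec := Function.update s.vec w x

variable {s : ColoredVectors ι J E} {u w : ι} {i j : J} {x : E}

theorem cls_erase (s : ColoredVectors ι J E) (u : ι) (j : J) :
    (s.erase u).cls j = s.cls j \ {u} := by
  ext i
  by_cases h : i = u <;> simp [cls, erase, h]

theorem uncolored_erase (s : ColoredVectors ι J E) (u : ι) :
    (s.erase u).uncolored = insert u s.uncolored := by
  ext i
  by_cases h : i = u <;> simp [uncolored, erase, h]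

theorem cls_assign_self (s : ColoredVectors ι J E) (w : ι) (j : J) (x : E) :
    (s.assign w j x).cls j = insert w (s.cls j) := by
  ext i
  by_cases h : i = w <;> simp [cls, assign, h]

theorem cls_assign_of_ne (hw : w ∈ s.uncolored) (hij : i ≠ j) (x : E) :
    (s.assign w j x).cls i = s.cls i := by
  have hw : s.col w = none := hw
  ext a
  by_cases h : a = w <;> simp [cls, assign, h, hw, hij.symm]

theorem uncolored_assign (s : ColoredVectors ι J E) (w : ι) (j : J) (x : E) :
    (s.assign w j x).uncolored = s.uncolored \ {w} := by
  ext i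
  by_cases h : i = w <;> simp [uncolored, assign, h]

theorem notMem_cls_of_mem_uncolored (hw : w ∈ s.uncolored) : w ∉ s.cls j :=
  fun h => Option.some_ne_none j (Eq.trans (Eq.symm h) hw)

theorem vec_assign_self (s : ColoredVectors ι J E) (w : ι) (j : J) (x : E) :
    (s.assign w j x).vec w = x := by
  simp [assign]

theorem eqOn_vec_assign (s : ColoredVectors ι J E) (j : J) (x : E) {S : Set ι} (hw : w ∉ S) :
    Set.EqOn (s.assign w j x).vec s.vec S := fun a ha => by
  simp [assign, ne_of_mem_of_not_mem ha hw]

variable {K : Type*} [Field K] [AddCommGroup E] [Module K E]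

variable (K) in
/-- Every coloured index `i` carries a vector of `D i`, and each colour class is linearly
independent. -/
structure IsValid (D : ι → Set E) (s : ColoredVectors ι J E) : Prop where
  vec_mem : ∀ i, i ∉ s.uncolored → s.vec i ∈ D i
  linearIndepOn : ∀ j, LinearIndepOn K s.vec (s.cls j)

variable (K) in
/-- A valid state with as few uncoloured indices as possible. -/
structure IsOptimal (D : ι → Set E) (s : ColoredVectors ι J E) : Prop extends s.IsValid K D where
  ncard_uncolored_le : ∀ s' : ColoredVectors ι J E,
    s'.IsValid K D → s.uncolored.ncard ≤ s'.uncolored.ncard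

variable {D : ι → Set E}

theorem IsValid.erase (hs : s.IsValid K D) (u : ι) : (s.erase u).IsValid K D where
  vec_mem i hi := hs.vec_mem i fun h => hi (uncolored_erase s u ▸ Set.mem_insert_of_mem u h)
  linearIndepOn j := cls_erase s u j ▸ (hs.linearIndepOn j).mono Set.sdiff_subset

theorem IsValid.assign (hs : s.IsValid K D) (hw : w ∈ s.uncolored) (hxD : x ∈ D w)
    (hx : x ∉ Submodule.span K (s.vec '' s.cls j)) : (s.assign w j x).IsValid K D where
  vec_mem i hi := by
    rw [uncolored_assign] at hi
    by_cases hiw : i = w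
    · rwa [hiw, vec_assign_self]
    · rw [eqOn_vec_assign s j x (Ne.symm hiw : w ∉ {i}) rfl]
      exact hs.vec_mem i fun h => hi ⟨h, hiw⟩
  linearIndepOn i := by
    have heq (i) := (eqOn_vec_assign s j x (notMem_cls_of_mem_uncolored (j := i) hw)).symm
    have hi := (hs.linearIndepOn i).congr (heq i)
    by_cases hij : i = j
    · subst hij
      rw [cls_assign_self]
      refine hi.insert ?_
      rwa [vec_assign_self, ← (heq i).image_eq]
    · rwa [cls_assign_of_ne hw hij]

variable (K D) in
theorem exists_isOptimal : ∃ s : ColoredVectors ι J E, s.IsOptimal K D := by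
  have hvalid : (⟨fun _ => none, fun _ => 0⟩ : ColoredVectors ι J E).IsValid K D :=
    ⟨fun i hi => absurd rfl hi, fun j => by simp [cls]⟩
  obtain ⟨s, hs, hmin⟩ := exists_minimalFor_of_wellFoundedLT
    (fun s : ColoredVectors ι J E => s.IsValid K D) (fun s => s.uncolored.ncard) ⟨_, hvalid⟩
  exact ⟨s, hs, fun s' hs' => (le_total _ _).elim id (hmin hs')⟩

theorem IsOptimal.mem_span [Finite ι] (hs : s.IsOptimal K D) (hw : w ∈ s.uncolored)
    (hx : x ∈ D w) (j : J) : x ∈ Submodule.span K (s.vec '' s.cls j) := by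
  by_contra hxs
  have hle := hs.ncard_uncolored_le _ (hs.assign hw hx hxs)
  rw [uncolored_assign] at hle
  exact (Set.ncard_sdiff_singleton_lt_of_mem hw).not_ge hle

variable (K) in
/-- An exchange: an index `u` of colour `j` loses its colour to an uncoloured index `w`, in such a
way that the colour class of `j` stays independent. -/
def Exchange (D : ι → Set E) (s s' : ColoredVectors ι J E) : Prop :=
  ∃ w u j x, w ∈ s.uncolored ∧ u ∈ s.cls j ∧ x ∈ D w ∧
    x ∉ Submodule.span K (s.vec '' (s.cls j \ {u})) ∧ s' = (s.erase u).assign w j x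

theorem IsOptimal.exchange {s' : ColoredVectors ι J E} (hs : s.IsOptimal K D)
    (h : s.Exchange K D s') : s'.IsOptimal K D := by
  obtain ⟨w, u, j, x, hw, hu, hxD, hx, rfl⟩ := h
  have hwu : w ∈ (s.erase u).uncolored := uncolored_erase s u ▸ Set.mem_insert_of_mem u hw
  refine ⟨(hs.erase u).assign hwu hxD (by rwa [cls_erase]), fun s' hs' => ?_⟩
  rw [uncolored_assign, uncolored_erase,
    Set.ncard_exchange' (fun h => notMem_cls_of_mem_uncolored h hu) hw]
  exact hs.ncard_uncolored_le s' hs'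

theorem span_exchange {A : Set ι} (hw : w ∈ s.uncolored) (hu : u ∈ s.cls j) (hwA : w ∈ A)
    (huA : u ∈ A) (hxA : x ∈ Submodule.span K (s.vec '' (s.cls j ∩ A)))
    (hx : x ∉ Submodule.span K (s.vec '' (s.cls j \ {u}))) (i : J) :
    Submodule.span K (((s.erase u).assign w j x).vec '' (((s.erase u).assign w j x).cls i ∩ A)) =
      Submodule.span K (s.vec '' (s.cls i ∩ A)) := by
  have hwu : w ∈ (s.erase u).uncolored := uncolored_erase s u ▸ Set.mem_insert_of_mem u hw
  have heq (i) := (eqOn_vec_assign (s.erase u) j x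
    (S := (s.erase u).cls i ∩ A) fun h => notMem_cls_of_mem_uncolored hwu h.1).image_eq
  by_cases hij : i = j
  · subst hij
    rw [cls_assign_self, Set.insert_inter_of_mem hwA, Set.image_insert_eq, vec_assign_self, heq,
      cls_erase]
    have hsplit : s.cls i ∩ A = insert u ((s.cls i \ {u}) ∩ A) := by
      rw [← Set.insert_inter_of_mem huA, Set.insert_sdiff_self_of_mem hu]
    rw [hsplit, Set.image_insert_eq] at hxA ⊢
    exact span_insert_eq_span_insert_of_mem_of_notMem hxA fun h =>
      hx (Submodule.span_mono (Set.image_mono Set.inter_subset_left) h)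
  · rw [cls_assign_of_ne hwu hij, heq, cls_erase, Set.sdiff_singleton_eq_self]
    · rfl
    · exact fun h => hij (Option.some.inj (h.symm.trans hu))

end ColoredVectors

variable {K : Type*} [Field K] [AddCommGroup E] [Module K E]

open ColoredVectors in
variable (J K) in
/-- The conclusion is the tight case of the matroid union theorem for the linear matroids on the
colours: `A` is the set of indices that can be left uncoloured after a sequence of exchanges. -/
theorem exists_isValid_subset_span [Finite ι] (D : ι → Set E) :
    ∃ (s : ColoredVectors ι J E) (A : Set ι), s.IsValid K D ∧ s.uncolored ⊆ A ∧
      ∀ j, ∀ w ∈ A, D w ⊆ Submodule.span K (s.vec '' (s.cls j ∩ A)) := by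
  obtain ⟨s, hs⟩ := exists_isOptimal (J := J) K D
  let A : Set ι := {w | ∃ t, Relation.ReflTransGen (Exchange K D) s t ∧ w ∈ t.uncolored}
  have optimal {t} (ht : Relation.ReflTransGen (Exchange K D) s t) : t.IsOptimal K D := by
    induction ht with
    | refl => exact hs
    | tail _ h ih => exact ih.exchange h
  have mem_of_exchange {t u w j x} (ht : Relation.ReflTransGen (Exchange K D) s t)
      (hw : w ∈ t.uncolored) (hu : u ∈ t.cls j) (hxD : x ∈ D w)
      (hx : x ∉ Submodule.span K (t.vec '' (t.cls j \ {u}))) : u ∈ A := by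
    refine ⟨_, ht.tail ⟨w, u, j, x, hw, hu, hxD, hx, rfl⟩, ?_⟩
    rw [uncolored_assign, uncolored_erase]
    exact ⟨Set.mem_insert u _, fun h => notMem_cls_of_mem_uncolored hw (h ▸ hu)⟩
  have mem_span {t w x} (ht : Relation.ReflTransGen (Exchange K D) s t) (hw : w ∈ t.uncolored)
      (hx : x ∈ D w) (j : J) : x ∈ Submodule.span K (t.vec '' (t.cls j ∩ A)) :=
    mem_span_image_inter_of_mem_span_image_sdiff ((optimal ht).linearIndepOn j) A
      ((optimal ht).mem_span hw hx j) fun u hu huA =>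
        of_not_not fun hxu => huA (mem_of_exchange ht hw hu hx hxu)
  have span_eq {t} (ht : Relation.ReflTransGen (Exchange K D) s t) (j : J) :
      Submodule.span K (t.vec '' (t.cls j ∩ A)) = Submodule.span K (s.vec '' (s.cls j ∩ A)) := by
    induction ht with
    | refl => rfl
    | tail ht h ih =>
      obtain ⟨w, u, i, x, hw, hu, hxD, hx, rfl⟩ := h
      rw [← ih]
      have hwA : w ∈ A := ⟨_, ht, hw⟩
      exact span_exchange hw hu hwA (mem_of_exchange ht hw hu hxD hx)
        (mem_span ht hw hxD i) hx j
  refine ⟨s, A, hs.toIsValid, fun w hw => ⟨s, .refl, hw⟩, ?_⟩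
  rintro j w ⟨t, ht, hw⟩ x hx
  exact span_eq ht j ▸ mem_span ht hw hx j

end MatroidUnion

/-! ### Disjoint connected spanning colour classes in a hypergraph -/

section HypergraphPacking

variable {τ ι J : Type*} [Finite τ]

theorem card_add_card_quot_le_card_of_linearIndepOn [Finite ι] {v : ι → τ →₀ ℚ} {S : Set ι}
    (hS : LinearIndepOn ℚ v S) {r : τ → τ → Prop}
    (hv : ∀ i ∈ S, ∃ a b, r a b ∧ v i = .single a 1 - .single b 1) :
    S.ncard + Nat.card (Quot r) ≤ Nat.card τ := by
  have := Fintype.ofFinite τ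
  have := Fintype.ofFinite (Quot r)
  have := Fintype.ofFinite S
  let f : (τ →₀ ℚ) →ₗ[ℚ] Quot r →₀ ℚ := Finsupp.lmapDomain ℚ ℚ (Quot.mk r)
  have hf : LinearMap.range f = ⊤ :=
    LinearMap.range_eq_top.2 (Finsupp.mapDomain_surjective Quot.mk_surjective)
  have hker : Submodule.span ℚ (Set.range fun i : S => v i) ≤ LinearMap.ker f := by
    rw [Submodule.span_le]
    rintro _ ⟨i, rfl⟩
    obtain ⟨a, b, hr, hab⟩ := hv i i.2
    change f (v i) = 0
    rw [hab, map_sub]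
    simp [f, Finsupp.mapDomain_single, Quot.sound hr]
  have hspan := Submodule.finrank_mono hker
  have hrank := LinearMap.finrank_range_add_finrank_ker f
  rw [finrank_span_eq_card hS, ← Nat.card_eq_fintype_card, Nat.card_coe_set_eq] at hspan
  rw [hf, finrank_top, Module.finrank_finsupp_self, Module.finrank_finsupp_self] at hrank
  simp only [Nat.card_eq_fintype_card]
  omega

theorem card_le_card_add_card_quot_of_mem_span [Finite ι] {v : ι → τ →₀ ℚ} {S : Set ι}
    {r : τ → τ → Prop}
    (hv : ∀ a b, r a b → .single a 1 - .single b 1 ∈ Submodule.span ℚ (v '' S)) :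
    Nat.card τ ≤ S.ncard + Nat.card (Quot r) := by
  have := Fintype.ofFinite τ
  have := Fintype.ofFinite (Quot r)
  have := Fintype.ofFinite S
  set U := Submodule.span ℚ (v '' S) with hU
  have hUle : Module.finrank ℚ U ≤ S.ncard := by
    rw [hU, Set.image_eq_range, ← Nat.card_coe_set_eq, Nat.card_eq_fintype_card]
    exact finrank_range_le_card _
  let f : Quot r → (τ →₀ ℚ) ⧸ U := Quot.lift (fun x => U.mkQ (.single x 1)) fun a b hab =>
    (Submodule.Quotient.eq U).2 (hv a b hab)
  have hf : Submodule.span ℚ (Set.range f) = ⊤ := by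
    have hsingle : Submodule.span ℚ (Set.range fun x : τ => Finsupp.single x (1 : ℚ)) = ⊤ := by
      simpa using (Finsupp.basisSingleOne (R := ℚ) (ι := τ)).span_eq
    have hrange : Set.range f = U.mkQ '' Set.range fun x : τ => Finsupp.single x (1 : ℚ) :=
      (Set.range_quot_lift _).trans (Set.range_comp U.mkQ _)
    rw [hrange, Submodule.span_image, hsingle, Submodule.map_top, Submodule.range_mkQ]
  have hquot := finrank_range_le_card (R := ℚ) f
  have hrank := U.finrank_quotient_add_finrank
  rw [Set.finrank, hf, finrank_top] at hquot
  rw [Module.finrank_finsupp_self] at hrank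
  simp only [Nat.card_eq_fintype_card]
  omega

/-- Two vertices of the hypergraph with hyperedges `N i` are joined by `A` if they lie in a common
hyperedge whose index belongs to `A`. -/
def JoinedBy (N : ι → Set τ) (A : Set ι) (x y : τ) : Prop := ∃ i ∈ A, x ∈ N i ∧ y ∈ N i

theorem ncard_compl_le_sum_ncard_sdiff [Finite ι] [Fintype J] {col : ι → Option J} {A : Set ι}
    (h : ∀ i ∉ A, col i ≠ none) : Aᶜ.ncard ≤ ∑ j, ({i | col i = some j} \ A).ncard := by
  refine (Set.ncard_le_ncard fun i hi => ?_).trans (Set.ncard_iUnion_le_of_fintype _)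
  obtain ⟨j, hj⟩ := Option.ne_none_iff_exists'.1 (h i hi)
  exact Set.mem_iUnion.2 ⟨j, hj, hi⟩

/-- The packing theorem for hypergraphs: the matroid union theorem is applied to the vectors
`e a - e b` with `a` and `b` in a common hyperedge. -/
theorem exists_connected_colors_or_exists_lt_mul_card_quot [Nonempty τ] [Finite ι] [Finite J]
    (N : ι → Set τ) :
    (∃ (col : ι → Option J) (a b : ι → τ), (∀ i j, col i = some j → a i ∈ N i ∧ b i ∈ N i) ∧
      ∀ j x y, Relation.EqvGen (fun x y => ∃ i, col i = some j ∧ a i = x ∧ b i = y) x y) ∨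
    ∃ A : Set ι, Aᶜ.ncard + Nat.card J < Nat.card J * Nat.card (Quot (JoinedBy N A)) := by
  have := Fintype.ofFinite J
  let D (i : ι) : Set (τ →₀ ℚ) := {z | ∃ a ∈ N i, ∃ b ∈ N i, z = .single a 1 - .single b 1}
  obtain ⟨s, A, hs, hA, hD⟩ := exists_isValid_subset_span J ℚ D
  have vec_eq (i : ι) : ∃ a b, ∀ j, s.col i = some j →
      a ∈ N i ∧ b ∈ N i ∧ s.vec i = .single a 1 - .single b 1 := by
    by_cases hi : s.col i = none
    · exact ⟨Classical.arbitrary τ, Classical.arbitrary τ, by simp [hi]⟩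
    · obtain ⟨a, ha, b, hb, hab⟩ := hs.vec_mem i hi
      exact ⟨a, b, fun _ _ => ⟨ha, hb, hab⟩⟩
  choose a b hab using vec_eq
  let r (j : J) (x y : τ) : Prop := ∃ i, s.col i = some j ∧ a i = x ∧ b i = y
  by_cases hconn : ∀ j, Subsingleton (Quot (r j))
  · exact .inl ⟨s.col, a, b, fun i j hij => ⟨(hab i j hij).1, (hab i j hij).2.1⟩, fun j x y =>
      Quot.eqvGen_exact ((hconn j).elim _ _)⟩
  push Not at hconn
  obtain ⟨j₀, hj₀⟩ := hconn
  refine .inr ⟨A, ?_⟩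
  have upper (j : J) : (s.cls j).ncard + Nat.card (Quot (r j)) ≤ Nat.card τ :=
    card_add_card_quot_le_card_of_linearIndepOn (hs.linearIndepOn j) fun i hi =>
      ⟨a i, b i, ⟨i, hi, rfl, rfl⟩, (hab i j hi).2.2⟩
  have lower (j : J) : Nat.card τ ≤ (s.cls j ∩ A).ncard + Nat.card (Quot (JoinedBy N A)) :=
    card_le_card_add_card_quot_of_mem_span fun x y ⟨i, hi, hx, hy⟩ =>
      hD j i hi ⟨x, hx, y, hy, rfl⟩
  have split (j : J) := Set.ncard_inter_add_ncard_sdiff_eq_ncard (s.cls j) A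
  have hcover := ncard_compl_le_sum_ncard_sdiff fun i hi hcol => hi (hA hcol)
  have hsum : ∑ j, ((s.cls j \ A).ncard + 1) < ∑ _j : J, Nat.card (Quot (JoinedBy N A)) := by
    refine Finset.sum_lt_sum (fun j _ => ?_) ⟨j₀, Finset.mem_univ _, ?_⟩
    · have : Nonempty (Quot (r j)) := Nonempty.map (Quot.mk _) inferInstance
      have := Nat.card_pos (α := Quot (r j))
      linarith [upper j, lower j, split j]
    · have := Finite.one_lt_card_iff_nontrivial.2 hj₀
      linarith [upper j₀, lower j₀, split j₀]
  simp only [Finset.sum_add_distrib, Finset.sum_const, Finset.card_univ, smul_eq_mul, mul_one,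
    ← Nat.card_eq_fintype_card] at hsum
  exact (Nat.add_le_add_right hcover _).trans_lt hsum

end HypergraphPacking

/-! ### Element cuts -/

section ElementCuts

variable {V : Type*} {G M : SimpleGraph V} {T A B : Set V} {k : ℕ}

/-- The edges of `G` joining two terminals. -/
def terminalEdges (G : SimpleGraph V) (T : Set V) : Set (Sym2 V) :=
  {e | e ∈ G.edgeSet ∧ ∀ x ∈ e, x ∈ T}

/-- The edges joining two terminals, one in `A` and the other in `B`. -/
def crossingEdges (G : SimpleGraph V) (T A B : Set V) : Set (Sym2 V) :=
  {e | e ∈ terminalEdges G T ∧ (∃ x ∈ e, x ∈ A) ∧ ∃ y ∈ e, y ∈ B}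

/-- The number of elements whose removal separates `A` from `B`, for an element cut `(A, B)`: all
vertices outside `A ∪ B`, and the terminal edges crossing from `A` to `B`. -/
noncomputable def cutSize (G : SimpleGraph V) (T A B : Set V) : ℕ :=
  (A ∪ B)ᶜ.ncard + (crossingEdges G T A B).ncard

/-- A separation of the terminals: disjoint sets which cover the terminals and contain at least one
terminal each. -/
structure IsTerminalSeparation (T A B : Set V) : Prop where
  disjoint : Disjoint A B
  subset_union : T ⊆ A ∪ B
  nonempty_left : (A ∩ T).Nonempty
  nonempty_right : (B ∩ T).Nonempty

/-- An element cut: a separation of the terminals such that only terminal edges go across. -/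
structure IsElementCut (G : SimpleGraph V) (T A B : Set V) : Prop
    extends IsTerminalSeparation T A B where
  mem_of_adj : ∀ x ∈ A, ∀ y ∈ B, G.Adj x y → x ∈ T ∧ y ∈ T

/-- Every element cut has size at least `k`. -/
def IsElementConnected (G : SimpleGraph V) (T : Set V) (k : ℕ) : Prop :=
  ∀ A B, IsElementCut G T A B → k ≤ cutSize G T A B

theorem cutSize_comm (G : SimpleGraph V) (T A B : Set V) : cutSize G T A B = cutSize G T B A := by
  rw [cutSize, cutSize, Set.union_comm, show crossingEdges G T A B = crossingEdges G T B A from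
    Set.ext fun e => and_congr_right fun _ => and_comm]

theorem IsTerminalSeparation.symm (h : IsTerminalSeparation T A B) :
    IsTerminalSeparation T B A :=
  ⟨h.disjoint.symm, Set.union_comm A B ▸ h.subset_union, h.nonempty_right, h.nonempty_left⟩

theorem IsElementCut.symm (h : IsElementCut G T A B) : IsElementCut G T B A :=
  ⟨h.toIsTerminalSeparation.symm, fun x hx y hy hxy => (h.mem_of_adj y hy x hx hxy.symm).symm⟩

section Menger

theorem ncard_inl_image_union_inr_image [Finite V] (G : SimpleGraph V) (T A B : Set V) :
    (Sum.inl '' (A ∪ B)ᶜ ∪ Sum.inr '' crossingEdges G T A B).ncard = cutSize G T A B := by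
  rw [Set.ncard_union_eq, Set.ncard_image_of_injective _ Sum.inl_injective,
    Set.ncard_image_of_injective _ Sum.inr_injective, cutSize]
  simp [Set.disjoint_left]

theorem IsElementCut.le_cutSize_of_hasElemPaths [Finite V] (h : IsElementCut G T A B) {u v : V}
    (hu : u ∈ A ∩ T) (hv : v ∈ B ∩ T) {n : ℕ} (hn : HasElemPaths G T u v n) :
    n ≤ cutSize G T A B := by
  classical
  obtain ⟨P, -, hP⟩ := hn
  have hvA : v ∉ A := fun hvA => Set.disjoint_left.1 h.disjoint hvA hv.1
  choose d hdP hdA hdA' using fun i => (P i).exists_boundary_dart A hu.1 hvA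
  let f (i : Fin n) : V ⊕ Sym2 V :=
    if (d i).snd ∈ B then Sum.inr (d i).edge else Sum.inl (d i).snd
  have hfmem (i : Fin n) : f i ∈ Sum.inl '' (A ∪ B)ᶜ ∪ Sum.inr '' crossingEdges G T A B := by
    by_cases hB : (d i).snd ∈ B
    · have hT := h.mem_of_adj _ (hdA i) _ hB (d i).adj
      refine .inr ⟨_, ⟨⟨(d i).edge_mem, fun x hx => ?_⟩, ⟨_, Sym2.mem_mk_left .., hdA i⟩,
        ⟨_, Sym2.mem_mk_right .., hB⟩⟩, (if_pos hB).symm⟩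
      rcases Sym2.mem_iff.1 hx with rfl | rfl
      exacts [hT.1, hT.2]
    · exact .inl ⟨_, fun hmem => hmem.elim (hdA' i) hB, (if_neg hB).symm⟩
  have hf : Function.Injective f := by
    intro i j hij
    by_contra hne
    obtain ⟨hedge, hvertex⟩ := hP i j hne
    by_cases hBi : (d i).snd ∈ B <;> by_cases hBj : (d j).snd ∈ B <;>
      simp only [f, hBi, hBj, if_true, if_false, reduceCtorEq, Sum.inl.injEq, Sum.inr.injEq] at hij
    · exact hedge _ (List.mem_map_of_mem (hdP i)) (hij ▸ List.mem_map_of_mem (hdP j))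
    · have hmem := hvertex _ ((P i).dart_snd_mem_support_of_mem_darts (hdP i))
        (hij ▸ (P j).dart_snd_mem_support_of_mem_darts (hdP j))
      have huv : {u, v} ⊆ T := Set.pair_subset hu.2 hv.2
      have hT : (d i).snd ∈ T := hmem.elim id fun hmem => huv hmem
      exact (h.subset_union hT).elim (hdA' i) hBi
  have hle := Set.ncard_le_ncard (Set.range_subset_iff.2 hfmem)
  rwa [← Set.image_univ, Set.ncard_image_of_injective _ hf, Set.ncard_univ, Nat.card_fin,
    ncard_inl_image_union_inr_image] at hle

theorem isElementConnected_of_le_elemConn [Finite V]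
    (hconn : ∀ u ∈ T, ∀ v ∈ T, u ≠ v → k ≤ elemConn G T u v) : IsElementConnected G T k := by
  intro A B h
  obtain ⟨u, hu⟩ := h.nonempty_left
  obtain ⟨v, hv⟩ := h.nonempty_right
  have huv : u ≠ v := fun huv => Set.disjoint_left.1 h.disjoint hu.1 (huv ▸ hv.1)
  refine (hconn u hu.2 v hv.2 huv).trans ?_
  exact csSup_le' fun n hn => h.le_cutSize_of_hasElemPaths hu hv hn

end Menger

section Uncrossing

variable {A₁ B₁ A₂ B₂ : Set V}

theorem IsElementCut.inter_union (h₁ : IsTerminalSeparation T A₁ B₁)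
    (h₂ : IsElementCut M T A₂ B₂) (hadj : ∀ x ∈ A₁, ∀ y ∈ B₁, M.Adj x y →
      (x ∈ T ∧ y ∈ T) ∨ (x ∉ A₂ ∪ B₂ ∧ y ∉ A₂ ∪ B₂))
    (hA : (A₁ ∩ A₂ ∩ T).Nonempty) : IsElementCut M T (A₁ ∩ A₂) (B₁ ∪ B₂) where
  disjoint := Set.disjoint_union_right.2
    ⟨h₁.disjoint.mono_left Set.inter_subset_left, h₂.disjoint.mono_left Set.inter_subset_right⟩
  subset_union t ht := by
    rcases h₁.subset_union ht with h | h <;> rcases h₂.subset_union ht with h' | h' <;>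
      simp [h, h']
  nonempty_left := hA
  nonempty_right := h₁.nonempty_right.mono
    (Set.inter_subset_inter_left T Set.subset_union_left)
  mem_of_adj := by
    rintro x ⟨hx₁, hx₂⟩ y (hy | hy) hxy
    · exact (hadj x hx₁ y hy hxy).resolve_right fun h => h.1 (.inl hx₂)
    · exact h₂.mem_of_adj x hx₂ y hy hxy

theorem ncard_add_ncard_le_of_union_subset_of_inter_subset {α : Type*} [Finite α]
    {S₁ S₂ S₃ S₄ : Set α} (hunion : S₃ ∪ S₄ ⊆ S₁ ∪ S₂) (hinter : S₃ ∩ S₄ ⊆ S₁ ∩ S₂) :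
    S₃.ncard + S₄.ncard ≤ S₁.ncard + S₂.ncard := by
  rw [← Set.ncard_union_add_ncard_inter S₁, ← Set.ncard_union_add_ncard_inter S₃]
  exact add_le_add (Set.ncard_le_ncard hunion) (Set.ncard_le_ncard hinter)

theorem cutSize_inter_union_add_cutSize_union_inter_le [Finite V] (M : SimpleGraph V) (T : Set V)
    (h₁ : Disjoint A₁ B₁) (h₂ : Disjoint A₂ B₂) :
    cutSize M T (A₁ ∩ A₂) (B₁ ∪ B₂) + cutSize M T (A₁ ∪ A₂) (B₁ ∩ B₂) ≤
      cutSize M T A₁ B₁ + cutSize M T A₂ B₂ := by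
  have hvertex : (A₁ ∩ A₂ ∪ (B₁ ∪ B₂))ᶜ.ncard + (A₁ ∪ A₂ ∪ B₁ ∩ B₂)ᶜ.ncard ≤
      (A₁ ∪ B₁)ᶜ.ncard + (A₂ ∪ B₂)ᶜ.ncard := by
    have hdisj₁ (x : V) : x ∈ A₁ → x ∉ B₁ := fun h => Set.disjoint_left.1 h₁ h
    have hdisj₂ (x : V) : x ∈ A₂ → x ∉ B₂ := fun h => Set.disjoint_left.1 h₂ h
    apply ncard_add_ncard_le_of_union_subset_of_inter_subset <;> intro x <;>
      have := hdisj₁ x <;> have := hdisj₂ x <;>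
      simp only [Set.mem_union, Set.mem_inter_iff, Set.mem_compl_iff] <;> tauto
  have hedge : (crossingEdges M T (A₁ ∩ A₂) (B₁ ∪ B₂)).ncard +
      (crossingEdges M T (A₁ ∪ A₂) (B₁ ∩ B₂)).ncard ≤
      (crossingEdges M T A₁ B₁).ncard + (crossingEdges M T A₂ B₂).ncard := by
    apply ncard_add_ncard_le_of_union_subset_of_inter_subset
    · rintro e (⟨he, ⟨x, hx, hxA₁, hxA₂⟩, y, hy, hyB | hyB⟩ |
        ⟨he, ⟨x, hx, hxA | hxA⟩, y, hy, hyB₁, hyB₂⟩)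
      exacts [.inl ⟨he, ⟨x, hx, hxA₁⟩, y, hy, hyB⟩, .inr ⟨he, ⟨x, hx, hxA₂⟩, y, hy, hyB⟩,
        .inl ⟨he, ⟨x, hx, hxA⟩, y, hy, hyB₁⟩, .inr ⟨he, ⟨x, hx, hxA⟩, y, hy, hyB₂⟩]
    · rintro e ⟨⟨he, ⟨x, hx, hxA₁, hxA₂⟩, -⟩, -, -, y, hy, hyB₁, hyB₂⟩
      exact ⟨⟨he, ⟨x, hx, hxA₁⟩, y, hy, hyB₁⟩, he, ⟨x, hx, hxA₂⟩, y, hy, hyB₂⟩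
  unfold cutSize
  omega

theorem IsTerminalSeparation.exists_mem_inter (h₁ : IsTerminalSeparation T A₁ B₁)
    (h₂ : IsTerminalSeparation T A₂ B₂) :
    ((A₁ ∩ A₂ ∩ T).Nonempty ∧ (B₁ ∩ B₂ ∩ T).Nonempty) ∨
      ((A₁ ∩ B₂ ∩ T).Nonempty ∧ (B₁ ∩ A₂ ∩ T).Nonempty) := by
  obtain ⟨a₁, ha₁, ha₁T⟩ := h₁.nonempty_left
  obtain ⟨b₁, hb₁, hb₁T⟩ := h₁.nonempty_right
  obtain ⟨a₂, ha₂, ha₂T⟩ := h₂.nonempty_left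
  obtain ⟨b₂, hb₂, hb₂T⟩ := h₂.nonempty_right
  rcases h₂.subset_union ha₁T with h | h <;> rcases h₂.subset_union hb₁T with h' | h'
  · exact (h₁.subset_union hb₂T).elim
      (fun h'' => .inr ⟨⟨b₂, ⟨h'', hb₂⟩, hb₂T⟩, b₁, ⟨hb₁, h'⟩, hb₁T⟩)
      fun h'' => .inl ⟨⟨a₁, ⟨ha₁, h⟩, ha₁T⟩, b₂, ⟨h'', hb₂⟩, hb₂T⟩
  · exact .inl ⟨⟨a₁, ⟨ha₁, h⟩, ha₁T⟩, b₁, ⟨hb₁, h'⟩, hb₁T⟩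
  · exact .inr ⟨⟨a₁, ⟨ha₁, h⟩, ha₁T⟩, b₁, ⟨hb₁, h'⟩, hb₁T⟩
  · exact (h₁.subset_union ha₂T).elim
      (fun h'' => .inl ⟨⟨a₂, ⟨h'', ha₂⟩, ha₂T⟩, b₁, ⟨hb₁, h'⟩, hb₁T⟩)
      fun h'' => .inr ⟨⟨a₁, ⟨ha₁, h⟩, ha₁T⟩, a₂, ⟨h'', ha₂⟩, ha₂T⟩

theorem IsElementConnected.two_mul_le_cutSize_add_cutSize [Finite V]
    (hM : IsElementConnected M T k) (h₁ : IsTerminalSeparation T A₁ B₁)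
    (h₂ : IsElementCut M T A₂ B₂) (hadj : ∀ x ∈ A₁, ∀ y ∈ B₁, M.Adj x y →
      (x ∈ T ∧ y ∈ T) ∨ (x ∉ A₂ ∪ B₂ ∧ y ∉ A₂ ∪ B₂)) :
    2 * k ≤ cutSize M T A₁ B₁ + cutSize M T A₂ B₂ := by
  wlog hcorner : (A₁ ∩ A₂ ∩ T).Nonempty ∧ (B₁ ∩ B₂ ∩ T).Nonempty generalizing A₂ B₂
  · rw [cutSize_comm M T A₂]
    refine this h₂.symm (by rwa [Set.union_comm]) ?_
    exact (h₁.exists_mem_inter h₂.toIsTerminalSeparation).resolve_left hcorner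
  have hinter := hM _ _ (.inter_union h₁ h₂ hadj hcorner.1)
  have hunion := hM _ _ (IsElementCut.inter_union h₁.symm h₂.symm (fun x hx y hy hxy => by
    rw [and_comm, and_comm (a := x ∉ _), Set.union_comm]
    exact hadj y hy x hx hxy.symm) hcorner.2).symm
  have := cutSize_inter_union_add_cutSize_union_inter_le M T h₁.disjoint h₂.disjoint
  omega

end Uncrossing

section Reduction

variable {p q : V}

theorem terminalEdges_deleteEdges (hq : q ∉ T) :
    terminalEdges (M.deleteEdges {s(p, q)}) T = terminalEdges M T := by
  ext e
  simp only [terminalEdges, edgeSet_deleteEdges, Set.mem_ofPred_eq, Set.mem_sdiff,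
    Set.mem_singleton_iff]
  refine ⟨fun h => ⟨h.1.1, h.2⟩, fun h => ⟨⟨h.1, ?_⟩, h.2⟩⟩
  rintro rfl
  exact hq (h.2 q (Sym2.mem_mk_right p q))

theorem terminalEdges_contract (hpq : p ≠ q) (hp : p ∉ T) (hq : q ∉ T) :
    terminalEdges (contract M p q) T = terminalEdges M T := by
  ext e
  induction e using Sym2.ind with | _ a b =>
  simp only [terminalEdges, Set.mem_ofPred_eq, mem_edgeSet, contract_adj hpq, Sym2.ball]
  constructor
  · rintro ⟨⟨-, -, -, h | ⟨rfl, -⟩ | ⟨rfl, -⟩⟩, ha, hb⟩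
    exacts [⟨h, ha, hb⟩, (hp ha).elim, (hp hb).elim]
  · rintro ⟨h, ha, hb⟩
    exact ⟨⟨h.ne, ne_of_mem_of_not_mem ha hq, ne_of_mem_of_not_mem hb hq, .inl h⟩, ha, hb⟩

theorem cutSize_congr (h : terminalEdges G T = terminalEdges M T) :
    cutSize G T A B = cutSize M T A B := by
  simp only [cutSize, crossingEdges, h]

theorem IsTerminalSeparation.insert_sdiff (h : IsTerminalSeparation T A B) (hq : q ∉ T) :
    IsTerminalSeparation T (insert q A) (B \ {q}) where
  disjoint := by
    rw [Set.disjoint_insert_left]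
    exact ⟨fun hqB => hqB.2 rfl, h.disjoint.mono_right Set.sdiff_subset⟩
  subset_union t ht := (h.subset_union ht).imp (Set.mem_insert_of_mem q)
    fun hB => ⟨hB, ne_of_mem_of_not_mem ht hq⟩
  nonempty_left := h.nonempty_left.mono (Set.inter_subset_inter_left T (Set.subset_insert q A))
  nonempty_right := h.nonempty_right.mono
    fun _ hx => ⟨⟨hx.1, ne_of_mem_of_not_mem hx.2 hq⟩, hx.2⟩

theorem IsTerminalSeparation.sdiff (h : IsTerminalSeparation T A B) (hq : q ∉ T) :
    IsTerminalSeparation T (A \ {q}) (B \ {q}) where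
  disjoint := h.disjoint.mono Set.sdiff_subset Set.sdiff_subset
  subset_union _ ht := (h.subset_union ht).imp (⟨·, ne_of_mem_of_not_mem ht hq⟩)
    (⟨·, ne_of_mem_of_not_mem ht hq⟩)
  nonempty_left := h.nonempty_left.mono
    fun _ hx => ⟨⟨hx.1, ne_of_mem_of_not_mem hx.2 hq⟩, hx.2⟩
  nonempty_right := h.nonempty_right.mono
    fun _ hx => ⟨⟨hx.1, ne_of_mem_of_not_mem hx.2 hq⟩, hx.2⟩

theorem cutSize_insert_sdiff_le [Finite V] (M : SimpleGraph V) (hq : q ∉ T) :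
    cutSize M T (insert q A) (B \ {q}) ≤ cutSize M T A B := by
  refine add_le_add (Set.ncard_le_ncard fun x => ?_) (Set.ncard_le_ncard ?_)
  · by_cases hx : x = q <;> simp [hx]
  · rintro e ⟨he, ⟨x, hx, hxA⟩, y, hy, hyB, -⟩
    exact ⟨he, ⟨x, hx, hxA.resolve_left (ne_of_mem_of_not_mem (he.2 x hx) hq)⟩, y, hy, hyB⟩

theorem cutSize_sdiff_le [Finite V] (M : SimpleGraph V) (T A B : Set V) (q : V) :
    cutSize M T (A \ {q}) (B \ {q}) ≤ cutSize M T A B + 1 := by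
  have hvertex : (A \ {q} ∪ B \ {q})ᶜ ⊆ insert q (A ∪ B)ᶜ := fun x => by
    by_cases hx : x = q <;> simp [hx]
  have hedge : crossingEdges M T (A \ {q}) (B \ {q}) ⊆ crossingEdges M T A B := by
    rintro e ⟨he, ⟨x, hx, hxA, -⟩, y, hy, hyB, -⟩
    exact ⟨he, ⟨x, hx, hxA⟩, y, hy, hyB⟩
  have h₁ := (Set.ncard_le_ncard hvertex).trans (Set.ncard_insert_le q _)
  have h₂ := Set.ncard_le_ncard hedge
  unfold cutSize
  omega

theorem IsElementConnected.le_cutSize_contract [Finite V] (hM : IsElementConnected M T k)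
    (hpq : p ≠ q) (hp : p ∉ T) (hq : q ∉ T) (h : IsElementCut (contract M p q) T A B)
    (hmem : p ∈ A ∪ B) : k ≤ cutSize M T A B := by
  wlog hpA : p ∈ A generalizing A B
  · rw [cutSize_comm]
    exact this h.symm (Set.union_comm A B ▸ hmem) (hmem.resolve_left hpA)
  refine (hM _ _ ⟨h.toIsTerminalSeparation.insert_sdiff hq, ?_⟩).trans
    (cutSize_insert_sdiff_le M hq)
  rintro x hx y ⟨hyB, hyq : y ≠ q⟩ hxy
  rcases eq_or_ne x q with rfl | hxq
  · have hpy : p ≠ y := fun hpy => Set.disjoint_left.1 h.disjoint hpA (hpy ▸ hyB)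
    exact (hp (h.mem_of_adj p hpA y hyB
      ((contract_adj hpq).2 ⟨hpy, hpq, hyq, .inr (.inl ⟨rfl, hxy⟩)⟩)).1).elim
  · exact h.mem_of_adj x (hx.resolve_left hxq) y hyB
      ((contract_adj hpq).2 ⟨hxy.ne, hxq, hyq, .inl hxy⟩)

theorem IsElementCut.sdiff_of_contract (hpq : p ≠ q) (hq : q ∉ T)
    (h : IsElementCut (contract M p q) T A B) : IsElementCut M T (A \ {q}) (B \ {q}) where
  toIsTerminalSeparation := h.toIsTerminalSeparation.sdiff hq
  mem_of_adj := by
    rintro x ⟨hxA, hxq⟩ y ⟨hyB, hyq⟩ hxy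
    exact h.mem_of_adj x hxA y hyB ((contract_adj hpq).2 ⟨hxy.ne, hxq, hyq, .inl hxy⟩)

theorem IsElementConnected.deleteEdges_or_contract [Finite V] (hM : IsElementConnected M T k)
    (hpq : p ≠ q) (hp : p ∉ T) (hq : q ∉ T) :
    IsElementConnected (M.deleteEdges {s(p, q)}) T k ∨
      IsElementConnected (contract M p q) T k := by
  by_contra! hcon
  simp only [IsElementConnected, not_forall, not_le] at hcon
  obtain ⟨⟨A₁, B₁, h₁, hlt₁⟩, A₂, B₂, h₂, hlt₂⟩ := hcon
  rw [cutSize_congr (terminalEdges_deleteEdges hq)] at hlt₁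
  rw [cutSize_congr (terminalEdges_contract hpq hp hq)] at hlt₂
  have hp₂ : p ∉ A₂ ∪ B₂ := fun h => hlt₂.not_ge (hM.le_cutSize_contract hpq hp hq h₂ h)
  have hadj : ∀ x ∈ A₁, ∀ y ∈ B₁, M.Adj x y → (x ∈ T ∧ y ∈ T) ∨
      (x ∉ A₂ \ {q} ∪ B₂ \ {q} ∧ y ∉ A₂ \ {q} ∪ B₂ \ {q}) := by
    intro x hx y hy hxy
    by_cases hxypq : s(x, y) = s(p, q)
    · right
      rw [← Set.union_sdiff_distrib]
      rcases Sym2.eq_iff.1 hxypq with ⟨rfl, rfl⟩ | ⟨rfl, rfl⟩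
      exacts [⟨fun h => hp₂ h.1, fun h => h.2 rfl⟩, ⟨fun h => h.2 rfl, fun h => hp₂ h.1⟩]
    · exact .inl (h₁.mem_of_adj x hx y hy (deleteEdges_adj.2 ⟨hxy, hxypq⟩))
  have hle := hM.two_mul_le_cutSize_add_cutSize h₁.toIsTerminalSeparation
    (h₂.sdiff_of_contract hpq hq) hadj
  have := cutSize_sdiff_le M T A₂ B₂ q
  omega

/-- A minor model in which each vertex of `T` is its own branch set. -/
structure IsTerminalModel (G : SimpleGraph V) (T : Set V) (M : SimpleGraph V)
    (B : V → Set V) : Prop extends IsMinorModel G M B where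
  branch_eq : ∀ t ∈ T, B t = {t}

theorem IsTerminalModel.trans {N : SimpleGraph V} {B C : V → Set V}
    (hB : IsTerminalModel G T M B) (hC : IsTerminalModel M T N C) :
    IsTerminalModel G T N fun v => ⋃ w ∈ C v, B w where
  toIsMinorModel := hB.toIsMinorModel.trans hC.toIsMinorModel
  branch_eq t ht := by simp [hB.branch_eq t ht, hC.branch_eq t ht]

theorem IsElementConnected.exists_isTerminalModel [Finite V] (hG : IsElementConnected G T k) :
    ∃ M B, IsTerminalModel G T M B ∧ IsElementConnected M T k ∧
      ∀ p q, M.Adj p q → p ∈ T ∨ q ∈ T := by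
  obtain ⟨M, ⟨⟨B, hB⟩, hM⟩, hmin⟩ := exists_minimalFor_of_wellFoundedLT
    (fun M => (∃ B, IsTerminalModel G T M B) ∧ IsElementConnected M T k)
    (fun M => M.edgeSet.ncard) ⟨G, ⟨_, isMinorModel_of_le le_rfl, fun _ _ => rfl⟩, hG⟩
  have hminimal {N : SimpleGraph V} {C : V → Set V} (hC : IsTerminalModel M T N C)
      (hN : IsElementConnected N T k) : ¬ N.edgeSet.ncard < M.edgeSet.ncard := fun hlt =>
    hlt.not_ge (hmin ⟨⟨_, hB.trans hC⟩, hN⟩ hlt.le)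
  refine ⟨M, B, hB, hM, fun p q hpq => ?_⟩
  by_contra! hT
  rcases hM.deleteEdges_or_contract hpq.ne hT.1 hT.2 with h | h
  · refine hminimal ⟨isMinorModel_of_le (M.deleteEdges_le _), fun _ _ => rfl⟩ h ?_
    rw [edgeSet_deleteEdges]
    exact Set.ncard_sdiff_singleton_lt_of_mem hpq
  · obtain ⟨C, hC, hCeq⟩ := isMinorModel_contract hpq
    exact hminimal ⟨hC, fun t ht =>
      hCeq t (ne_of_mem_of_not_mem ht hT.1) (ne_of_mem_of_not_mem ht hT.2)⟩ h
      (ncard_edgeSet_contract_lt hpq)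

end Reduction

end ElementCuts

/-! ### Counting elements across a partition of the terminals -/

section IncidenceGraph

variable {α β : Type*}

/-- The bipartite graph of a relation. -/
def incidenceGraph (r : α → β → Prop) : SimpleGraph (α ⊕ β) where
  Adj
    | .inl a, .inr b => r a b
    | .inr b, .inl a => r a b
    | _, _ => False
  symm := ⟨by rintro (a | b) (a' | b') h <;> exact h⟩
  loopless := ⟨by rintro (a | b) h <;> exact h⟩

theorem sum_ncard_comm [Fintype α] [Fintype β] (r : α → β → Prop) :
    ∑ a, {b | r a b}.ncard = ∑ b, {a | r a b}.ncard := by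
  classical
  simp only [Set.ncard_eq_toFinset_card', Set.toFinset_ofPred]
  exact Finset.sum_card_bipartiteAbove_eq_sum_card_bipartiteBelow r

theorem ncard_edgeSet_incidenceGraph [Fintype α] [Finite β] (r : α → β → Prop) :
    (incidenceGraph r).edgeSet.ncard = ∑ a, {b | r a b}.ncard := by
  have := Fintype.ofFinite β
  have hinl (a : α) : (incidenceGraph r).neighborSet (.inl a) = Sum.inr '' {b | r a b} := by
    ext (x | x) <;> simp [incidenceGraph]
  have hinr (b : β) : (incidenceGraph r).neighborSet (.inr b) = Sum.inl '' {a | r a b} := by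
    ext (x | x) <;> simp [incidenceGraph]
  have hsum := sum_ncard_neighborSet (incidenceGraph r)
  simp only [Fintype.sum_sum_type, hinl, hinr, Set.ncard_image_of_injective _ Sum.inl_injective,
    Set.ncard_image_of_injective _ Sum.inr_injective, ← sum_ncard_comm r] at hsum
  omega

end IncidenceGraph

section ElementHypergraph

variable {V : Type*} {M : SimpleGraph V} {T : Set V} {A : Set (V ⊕ Sym2 V)}

/-- The hypergraph on the terminals with one hyperedge per element of `M`: for a non-terminal the
set of its terminal neighbours, and for a terminal edge the set of its ends. The remaining indices
carry the empty hyperedge. -/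
def elementHyperedge (M : SimpleGraph V) (T : Set V) : V ⊕ Sym2 V → Set T
  | .inl w => {t | w ∉ T ∧ M.Adj w t}
  | .inr e => {t | e ∈ terminalEdges M T ∧ (t : V) ∈ e}

theorem IsElementConnected.le_ncard_elementHyperedge [Finite V] {k : ℕ}
    (hM : IsElementConnected M T k) (hind : ∀ p q, M.Adj p q → p ∈ T ∨ q ∈ T) {S : Set T}
    (hS : S.Nonempty) (hSc : Sᶜ.Nonempty) :
    k ≤ {i | (elementHyperedge M T i ∩ S).Nonempty ∧
      (elementHyperedge M T i ∩ Sᶜ).Nonempty}.ncard := by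
  let X : Set V := Subtype.val '' S ∪ {w | w ∉ T ∧ elementHyperedge M T (.inl w) ⊆ S}
  let Y : Set V := Subtype.val '' Sᶜ ∪ {w | w ∉ T ∧ elementHyperedge M T (.inl w) ⊆ Sᶜ} \ X
  have hcut : IsElementCut M T X Y := by
    refine ⟨⟨?_, fun t ht => ?_, ?_, ?_⟩, ?_⟩
    · refine Set.disjoint_union_right.2 ⟨?_, Set.disjoint_sdiff_right⟩
      rw [Set.disjoint_left]
      rintro _ (⟨t, ht, rfl⟩ | hw) ⟨t', ht', hte⟩
      exacts [ht' (Subtype.ext hte ▸ ht), hw.1 (hte ▸ t'.2)]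
    · by_cases htS : ⟨t, ht⟩ ∈ S
      exacts [.inl (.inl ⟨_, htS, rfl⟩), .inr (.inl ⟨_, htS, rfl⟩)]
    · exact hS.elim fun t ht => ⟨t, .inl ⟨t, ht, rfl⟩, t.2⟩
    · exact hSc.elim fun t ht => ⟨t, .inl ⟨t, ht, rfl⟩, t.2⟩
    · rintro _ (⟨x, hx, rfl⟩ | ⟨hxT, hx⟩) _ (⟨y, hy, rfl⟩ | ⟨⟨hyT, hy⟩, -⟩) hxy
      · exact ⟨x.2, y.2⟩
      · exact (hy ⟨hyT, hxy.symm⟩ hx).elim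
      · exact (hy (hx ⟨hxT, hxy⟩)).elim
      · exact ((hind _ _ hxy).elim hxT hyT).elim
  refine (hM X Y hcut).trans ?_
  rw [← ncard_inl_image_union_inr_image]
  refine Set.ncard_le_ncard (Set.union_subset ?_ ?_)
  · rintro _ ⟨w, hw, rfl⟩
    have hwT : w ∉ T := fun hwT => hw (hcut.subset_union hwT)
    have hwX : w ∉ X := fun hwX => hw (.inl hwX)
    have not_subset {S' : Set T} (h : ¬ elementHyperedge M T (.inl w) ⊆ S'ᶜ) :
        (elementHyperedge M T (.inl w) ∩ S').Nonempty := by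
      rwa [Set.subset_compl_iff_disjoint_right, Set.not_disjoint_iff_nonempty_inter] at h
    refine ⟨not_subset fun h => hw (.inr (.inr ⟨⟨hwT, h⟩, hwX⟩)), not_subset fun h => ?_⟩
    exact hwX (.inr ⟨hwT, by rwa [compl_compl] at h⟩)
  · rintro _ ⟨e, ⟨he, ⟨x, hx, hxX⟩, y, hy, hyY⟩, rfl⟩
    obtain ⟨x, hxS, rfl⟩ := hxX.resolve_right fun h => h.1 (he.2 _ hx)
    obtain ⟨y, hyS, rfl⟩ := hyY.resolve_right fun h => h.1.1 (he.2 _ hy)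
    exact ⟨⟨x, ⟨he, hx⟩, hxS⟩, y, ⟨he, hy⟩, hyS⟩

theorem ncard_elementHyperedge_inr_le (M : SimpleGraph V) (T : Set V) (e : Sym2 V) :
    (elementHyperedge M T (.inr e)).ncard ≤ 2 := by
  induction e using Sym2.ind with | _ a b =>
  rw [← Set.ncard_image_of_injective _ Subtype.val_injective]
  refine (Set.ncard_le_ncard (t := {a, b}) ?_ (Set.toFinite _)).trans
    ((Set.ncard_insert_le a {b}).trans_eq (by rw [Set.ncard_singleton]))
  rintro _ ⟨t, ht, rfl⟩
  exact Sym2.mem_iff.1 ht.2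

/-- A class of terminals joined by `A`, together with the non-terminals in `A` which join
terminals of this class. -/
def classBranch (M : SimpleGraph V) (T : Set V) (A : Set (V ⊕ Sym2 V))
    (c : Quot (JoinedBy (elementHyperedge M T) A)) : Set V :=
  Subtype.val '' {t | Quot.mk _ t = c} ∪
    {w | .inl w ∈ A ∧ c ∈ Quot.mk _ '' elementHyperedge M T (.inl w)}

theorem disjoint_classBranch {c c' : Quot (JoinedBy (elementHyperedge M T) A)} (hne : c ≠ c') :
    Disjoint (classBranch M T A c) (classBranch M T A c') := by
  rw [Set.disjoint_left]
  rintro _ (⟨t, rfl, rfl⟩ | ⟨hw, t, ht, rfl⟩) (⟨t', rfl, h⟩ | ⟨-, t', ht', rfl⟩)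
  · exact hne (congrArg _ (Subtype.ext h.symm))
  · exact ht'.1 t.2
  · exact ht.1 (h ▸ t'.2)
  · exact hne (Quot.sound ⟨_, hw, ht, ht'⟩)

theorem adj_of_mem_elementHyperedge_inr {e : Sym2 V} {x y : T}
    (hx : x ∈ elementHyperedge M T (.inr e)) (hy : y ∈ elementHyperedge M T (.inr e))
    (hxy : x ≠ y) : e = s((x : V), (y : V)) ∧ M.Adj x y := by
  have he := (Sym2.mem_and_mem_iff (Subtype.coe_ne_coe.2 hxy)).1 ⟨hx.2, hy.2⟩
  exact ⟨he, (he ▸ hx.1.1 : s((x : V), (y : V)) ∈ M.edgeSet)⟩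

theorem preconnected_induce_classBranch (c : Quot (JoinedBy (elementHyperedge M T) A)) :
    (M.induce (classBranch M T A c)).Preconnected := by
  rw [preconnected_induce_iff_reachable]
  set H := (M.induce (classBranch M T A c)).spanningCoe
  have adj_of_mem {w : V} {t : T} (hw : .inl w ∈ A) (ht : t ∈ elementHyperedge M T (.inl w))
      (hc : Quot.mk _ t = c) : H.Adj w t :=
    spanningCoe_induce_adj.2 ⟨ht.2, .inr ⟨hw, t, ht, hc⟩, .inl ⟨t, hc, rfl⟩⟩
  have reachable_of_eqvGen {x y : T}
      (hxy : Relation.EqvGen (JoinedBy (elementHyperedge M T) A) x y) (hx : Quot.mk _ x = c) :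
      H.Reachable x y := by
    induction hxy with
    | rel x y hxy =>
      have hy := (Quot.sound hxy).symm.trans hx
      obtain ⟨w | e, hA, hxe, hye⟩ := hxy
      · exact (adj_of_mem hA hxe hx).symm.reachable.trans (adj_of_mem hA hye hy).reachable
      · rcases eq_or_ne x y with rfl | hne
        · rfl
        · exact (spanningCoe_induce_adj.2 ⟨(adj_of_mem_elementHyperedge_inr hxe hye hne).2,
            .inl ⟨x, hx, rfl⟩, .inl ⟨y, hy, rfl⟩⟩).reachable
    | refl x => rfl
    | symm x y hxy ih => exact (ih ((Quot.eqvGen_sound hxy).trans hx)).symm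
    | trans x y z hxy _ ih ih' =>
      exact (ih hx).trans (ih' ((Quot.eqvGen_sound hxy).symm.trans hx))
  have exists_terminal (x : V) (hx : x ∈ classBranch M T A c) :
      ∃ t : T, Quot.mk _ t = c ∧ H.Reachable x t := by
    rcases hx with ⟨t, ht, rfl⟩ | ⟨hw, t, ht, hc⟩
    exacts [⟨t, ht, .rfl⟩, ⟨t, hc, (adj_of_mem hw ht hc).reachable⟩]
  intro x hx y hy
  obtain ⟨t, ht, hxt⟩ := exists_terminal x hx
  obtain ⟨t', ht', hyt'⟩ := exists_terminal y hy
  exact (hxt.trans (reachable_of_eqvGen (Quot.eqvGen_exact (ht.trans ht'.symm)) ht)).trans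
    hyt'.symm

theorem exists_isMinorModel_incidenceGraph (M : SimpleGraph V) (T : Set V)
    (A : Set (V ⊕ Sym2 V)) :
    ∃ B, IsMinorModel M (incidenceGraph fun (c : Quot (JoinedBy (elementHyperedge M T) A))
      (w : {w // .inl w ∉ A}) => c ∈ Quot.mk _ '' elementHyperedge M T (.inl w)) B := by
  have disjoint (c : Quot (JoinedBy (elementHyperedge M T) A)) (w : {w // .inl w ∉ A}) :
      Disjoint (classBranch M T A c) ({w.1} \ T) := by
    rw [Set.disjoint_right]
    rintro _ ⟨rfl, hwT⟩ (⟨t, -, h⟩ | hw)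
    exacts [hwT (h ▸ t.2), w.2 hw.1]
  refine ⟨Sum.elim (classBranch M T A) fun w => {w.1} \ T, ⟨?_, ?_, ?_⟩⟩
  · rintro (c | w) (c' | w') hne
    · exact disjoint_classBranch fun h => hne (congrArg _ h)
    · exact disjoint c w'
    · exact (disjoint c' w).symm
    · refine Disjoint.mono Set.sdiff_subset Set.sdiff_subset (Set.disjoint_singleton.2 fun h => ?_)
      exact hne (congrArg _ (Subtype.ext h))
  · rintro (c | w)
    · exact preconnected_induce_classBranch c
    · have : Subsingleton ↥(Sum.elim (classBranch M T A) (fun w => {w.1} \ T) (.inr w)) :=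
        (Set.subsingleton_singleton.anti Set.sdiff_subset).coe_sort
      exact Preconnected.of_subsingleton
  · rintro (c | w) (c' | w') h
    · exact h.elim
    · obtain ⟨t, ht, hc⟩ := h
      exact ⟨t, .inl ⟨t, hc, rfl⟩, w', ⟨rfl, ht.1⟩, ht.2.symm⟩
    · obtain ⟨t, ht, hc⟩ := h
      exact ⟨w, ⟨rfl, ht.1⟩, t, .inl ⟨t, hc, rfl⟩, ht.2⟩
    · exact h.elim

end ElementHypergraph

section Counting

variable {V : Type*} [Finite V] {M : SimpleGraph V} {T : Set V} {A : Set (V ⊕ Sym2 V)} {k : ℕ}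

theorem IsElementConnected.le_ncard_add_ncard (hM : IsElementConnected M T k)
    (hind : ∀ p q, M.Adj p q → p ∈ T ∨ q ∈ T)
    [Nontrivial (Quot (JoinedBy (elementHyperedge M T) A))]
    (c : Quot (JoinedBy (elementHyperedge M T) A)) :
    k ≤ {w : {w // .inl w ∉ A} | c ∈ Quot.mk _ '' elementHyperedge M T (.inl w)}.ncard +
      {e : {e // .inr e ∉ A} | c ∈ Quot.mk _ '' elementHyperedge M T (.inr e)}.ncard := by
  obtain ⟨c', hc'⟩ := exists_ne c
  have hS : {t | Quot.mk (JoinedBy (elementHyperedge M T) A) t = c}.Nonempty := c.exists_rep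
  have hSc : {t | Quot.mk (JoinedBy (elementHyperedge M T) A) t = c}ᶜ.Nonempty :=
    c'.exists_rep.imp fun t ht htc => hc' (ht.symm.trans htc)
  refine (hM.le_ncard_elementHyperedge hind hS hSc).trans ?_
  refine (Set.ncard_le_ncard (t := (fun w : {w // .inl w ∉ A} => .inl w.1) '' _ ∪
    (fun e : {e // .inr e ∉ A} => .inr e.1) '' _) ?_).trans ((Set.ncard_union_le _ _).trans
    (add_le_add (Set.ncard_image_le (Set.toFinite _)) (Set.ncard_image_le (Set.toFinite _))))
  rintro i ⟨⟨t, ht, hc⟩, t', ht', hc'⟩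
  have hi : i ∉ A := fun hi => hc' ((Quot.sound ⟨i, hi, ht', ht⟩).trans hc)
  rcases i with w | e
  exacts [.inl ⟨⟨w, hi⟩, ⟨t, ht, hc⟩, rfl⟩, .inr ⟨⟨e, hi⟩, ⟨t, ht, hc⟩, rfl⟩]

theorem IsElementConnected.card_quot_mul_le (hM : IsElementConnected M T k)
    (hind : ∀ p q, M.Adj p q → p ∈ T ∨ q ∈ T) (hK5 : ¬ HasMinor M (completeGraph (Fin 5)))
    [Nontrivial (Quot (JoinedBy (elementHyperedge M T) A))] :
    Nat.card (Quot (JoinedBy (elementHyperedge M T) A)) * k ≤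
      3 * (Nat.card (Quot (JoinedBy (elementHyperedge M T) A)) + Aᶜ.ncard) := by
  let C := Quot (JoinedBy (elementHyperedge M T) A)
  have := Fintype.ofFinite C
  have := Fintype.ofFinite {w : V // .inl w ∉ A}
  have := Fintype.ofFinite {e : Sym2 V // .inr e ∉ A}
  have hsum := Finset.sum_le_sum fun (c : C) (_ : c ∈ Finset.univ) =>
    hM.le_ncard_add_ncard hind c
  obtain ⟨B, hB⟩ := exists_isMinorModel_incidenceGraph M T A
  have hvertex := ncard_edgeSet_le_three_mul fun h => hK5 (hB.hasMinor_completeGraph_of_hasMinor h)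
  have hedge : ∑ c : C,
      {e : {e // .inr e ∉ A} | c ∈ Quot.mk _ '' elementHyperedge M T (.inr e)}.ncard ≤
      Nat.card {e : Sym2 V // .inr e ∉ A} * 2 := by
    rw [sum_ncard_comm, Nat.card_eq_fintype_card]
    refine Finset.sum_le_card_nsmul _ _ _ fun e _ => ?_
    exact (Set.ncard_image_le (Set.toFinite _)).trans (ncard_elementHyperedge_inr_le M T e)
  have hcompl : Nat.card {w : V // .inl w ∉ A} + Nat.card {e : Sym2 V // .inr e ∉ A} =
      Aᶜ.ncard := by
    rw [← Nat.card_sum, ← Nat.card_coe_set_eq]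
    exact Nat.card_congr (Equiv.subtypeSum (p := (· ∉ A))).symm
  rw [Finset.sum_const, Finset.card_univ, smul_eq_mul, ← Nat.card_eq_fintype_card,
    Finset.sum_add_distrib, ← ncard_edgeSet_incidenceGraph] at hsum
  rw [Nat.card_sum] at hvertex
  linarith

theorem IsElementConnected.mul_card_quot_le (hM : IsElementConnected M T k)
    (hind : ∀ p q, M.Adj p q → p ∈ T ∨ q ∈ T) (hK5 : ¬ HasMinor M (completeGraph (Fin 5)))
    {n : ℕ} (hn : n ≤ k / 3 - 1) (A : Set (V ⊕ Sym2 V)) :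
    n * Nat.card (Quot (JoinedBy (elementHyperedge M T) A)) ≤ Aᶜ.ncard + n := by
  rcases Nat.eq_zero_or_pos n with rfl | hpos
  · simp
  rcases subsingleton_or_nontrivial (Quot (JoinedBy (elementHyperedge M T) A)) with hC | hC
  · exact (Nat.mul_le_mul_left n (Finite.card_le_one_iff_subsingleton.2 hC)).trans (by omega)
  · have hk : 3 * (n + 1) ≤ k := by omega
    linarith [hM.card_quot_mul_le hind hK5 (A := A), Nat.mul_le_mul_left
      (Nat.card (Quot (JoinedBy (elementHyperedge M T) A))) hk]

end Counting

/-! ### Steiner trees -/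

section SteinerTree

variable {V : Type*} {H : SimpleGraph V} {T : Set V}

theorem ncard_neighborSet_toSubgraph_of_isPath {a b x : V} {p : H.Walk a b} (hp : p.IsPath)
    (hx : x ∈ p.support) (hxa : x ≠ a) (hxb : x ≠ b) :
    (p.toSubgraph.neighborSet x).ncard = 2 := by
  obtain ⟨i, rfl, hi⟩ := Walk.mem_support_iff_exists_getVert.1 hx
  have h0 : i ≠ 0 := fun h => hxa (by rw [h, Walk.getVert_zero])
  have hlen : i ≠ p.length := fun h => hxb (by rw [h, Walk.getVert_length])
  exact hp.ncard_neighborSet_toSubgraph_internal_eq_two h0 (hi.lt_of_ne hlen)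

theorem exists_le_reachable_ncard_neighborSet_le {a b : V} (h : H.Reachable a b) :
    ∃ P ≤ H, P.Reachable a b ∧ ∀ x, x ≠ a → x ≠ b → (P.neighborSet x).ncard ≤ 2 := by
  obtain ⟨p, hp⟩ := h.exists_isPath
  refine ⟨p.toSubgraph.spanningCoe, p.toSubgraph.spanningCoe_le, ?_, fun x hxa hxb => ?_⟩
  · exact ⟨p.transfer _ (Sym2.ind fun x y he => (Walk.mem_edges_toSubgraph p).2 he)⟩
  · by_cases hx : x ∈ p.support
    · exact (ncard_neighborSet_toSubgraph_of_isPath hp hx hxa hxb).le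
    · have hempty : p.toSubgraph.spanningCoe.neighborSet x = ∅ := by
        refine Set.eq_empty_of_forall_notMem fun y hxy => hx ?_
        exact (Walk.mem_verts_toSubgraph p).1 (p.toSubgraph.edge_vert hxy)
      simp [hempty]

theorem reachable_deleteEdges_of_reachable {x y s t : V}
    (hxy : (H.deleteEdges {s(x, y)}).Reachable x y) (h : H.Reachable s t) :
    (H.deleteEdges {s(x, y)}).Reachable s t := by
  obtain ⟨p⟩ := h
  induction p with
  | nil => rfl
  | @cons u v _ huv _ ih =>
    refine Reachable.trans ?_ ih
    by_cases he : s(u, v) = s(x, y)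
    · rcases Sym2.eq_iff.1 he with ⟨rfl, rfl⟩ | ⟨rfl, rfl⟩
      exacts [hxy, hxy.symm]
    · exact (deleteEdges_adj.2 ⟨huv, he⟩).reachable

theorem exists_isSteinerTree [Finite V] (hT : ∀ s ∈ T, ∀ t ∈ T, H.Reachable s t) :
    ∃ F, IsSteinerTree H T F ∧ ∀ x ∈ F.support, x ∉ T → 2 ≤ (F.neighborSet x).ncard := by
  obtain ⟨F, ⟨hFH, hF⟩, hmin⟩ := exists_minimal_of_wellFoundedLT
    (fun F => F ≤ H ∧ ∀ s ∈ T, ∀ t ∈ T, F.Reachable s t) ⟨H, le_rfl, hT⟩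
  have exists_separated {x y : V} (hxy : F.Adj x y) :
      ∃ s ∈ T, ∃ t ∈ T, ¬ (F.deleteEdges {s(x, y)}).Reachable s t := by
    by_contra! hcon
    have hle := hmin ⟨(F.deleteEdges_le _).trans hFH, hcon⟩ (F.deleteEdges_le _)
    exact (deleteEdges_adj.1 (hle hxy)).2 rfl
  have exists_path {x y : V} (hxy : F.Adj x y) :
      ∃ s ∈ T, ∃ t ∈ T, ∃ p : F.Walk s t, p.IsPath ∧ x ∈ p.support := by
    obtain ⟨s, hs, t, ht, hst⟩ := exists_separated hxy
    obtain ⟨p, hp⟩ := (hF s hs t ht).exists_isPath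
    refine ⟨s, hs, t, ht, p, hp, ?_⟩
    by_contra hx
    exact hst ⟨p.toDeleteEdge _ fun he => hx (p.fst_mem_support_of_mem_edges he)⟩
  have reachable_terminal (x : V) (hx : x ∈ F.support ∪ T) : ∃ t ∈ T, F.Reachable t x := by
    rcases hx with ⟨y, hxy⟩ | hx
    · obtain ⟨s, hs, _, -, _, -, hx⟩ := exists_path hxy
      obtain ⟨q, -, -⟩ := Walk.mem_support_iff_exists_append.1 hx
      exact ⟨s, hs, ⟨q⟩⟩
    · exact ⟨x, hx, .rfl⟩
  refine ⟨F, ⟨hFH, isAcyclic_iff_forall_adj_isBridge.2 fun x y hxy => ?_, ?_⟩, ?_⟩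
  · obtain ⟨s, hs, t, ht, hst⟩ := exists_separated hxy
    exact fun h => hst (reachable_deleteEdges_of_reachable h (hF s hs t ht))
  · intro x hx y hy
    obtain ⟨s, hs, hsx⟩ := reachable_terminal x hx
    obtain ⟨t, ht, hty⟩ := reachable_terminal y hy
    exact hsx.symm.trans ((hF s hs t ht).trans hty)
  · rintro x ⟨y, hxy⟩ hxT
    obtain ⟨s, hs, t, ht, p, hp, hx⟩ := exists_path hxy
    rw [← ncard_neighborSet_toSubgraph_of_isPath hp hx (ne_of_mem_of_not_mem hs hxT).symm
      (ne_of_mem_of_not_mem ht hxT).symm]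
    exact Set.ncard_le_ncard (p.toSubgraph.neighborSet_subset x)

end SteinerTree

/-! ### Lifting colour classes to Steiner trees -/

section Elements

variable {V : Type*} {G M H H' : SimpleGraph V} {T : Set V}

/-- The elements of `H`: its non-isolated non-terminals and its terminal edges. -/
def elements (H : SimpleGraph V) (T : Set V) : Set (V ⊕ Sym2 V) :=
  .inl '' (H.support \ T) ∪ .inr '' terminalEdges H T

theorem elements_subset_iff {R : Set (V ⊕ Sym2 V)} :
    elements H T ⊆ R ↔
      ∀ x y, H.Adj x y → (x ∉ T → .inl x ∈ R) ∧ (x ∈ T → y ∈ T → .inr s(x, y) ∈ R) := by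
  refine ⟨fun h x y hxy => ⟨fun hx => h (.inl ⟨x, ⟨⟨y, hxy⟩, hx⟩, rfl⟩), fun hx hy =>
    h (.inr ⟨s(x, y), ⟨hxy, Sym2.ball.2 ⟨hx, hy⟩⟩, rfl⟩)⟩, fun h => ?_⟩
  rintro _ (⟨x, ⟨⟨y, hxy⟩, hx⟩, rfl⟩ | ⟨e, ⟨he, heT⟩, rfl⟩)
  · exact (h x y hxy).1 hx
  · induction e using Sym2.ind with | _ x y =>
    exact (h x y he).2 (heT x (Sym2.mem_mk_left x y)) (heT y (Sym2.mem_mk_right x y))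

theorem elements_mono (h : H ≤ H') : elements H T ⊆ elements H' T :=
  elements_subset_iff.2 fun x y hxy => elements_subset_iff.1 subset_rfl x y (h hxy)

theorem eDisj_of_disjoint_elements (h : Disjoint (elements H T) (elements H' T)) :
    EDisj T H H' := by
  have hsupport (x : V) (hx : x ∈ H.support) (hx' : x ∈ H'.support) : x ∈ T := by
    by_contra hxT
    exact Set.disjoint_left.1 h (.inl ⟨x, ⟨hx, hxT⟩, rfl⟩) (.inl ⟨x, ⟨hx', hxT⟩, rfl⟩)
  refine ⟨Set.disjoint_left.2 fun e he he' => ?_, hsupport⟩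
  have heT (x : V) (hx : x ∈ e) : x ∈ T := by
    obtain ⟨y, rfl⟩ := Sym2.mem_iff_exists.1 hx
    exact hsupport x ⟨y, he⟩ ⟨y, he'⟩
  exact Set.disjoint_left.1 h (.inr ⟨e, ⟨he, heT⟩, rfl⟩) (.inr ⟨e, ⟨he', heT⟩, rfl⟩)

/-- The elements of `G` that represent an element of a minor with branch sets `B`. -/
def elementRegion (B : V → Set V) : V ⊕ Sym2 V → Set (V ⊕ Sym2 V)
  | .inl w => .inl '' B w
  | .inr e => {.inr e}

theorem IsMinorModel.pairwise_disjoint_elementRegion {B : V → Set V} (hB : IsMinorModel G M B) :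
    Pairwise fun i i' => Disjoint (elementRegion B i) (elementRegion B i') := by
  rintro (w | e) (w' | e') hne
  · exact (Set.disjoint_image_iff Sum.inl_injective).2 (hB.disjoint fun h => hne (congrArg _ h))
  · simp [elementRegion]
  · simp [elementRegion]
  · exact Set.disjoint_singleton.2 hne

theorem IsTerminalModel.notMem_of_mem_branch {B : V → Set V} (hB : IsTerminalModel G T M B)
    {w : V} (hw : w ∉ T) {x : V} (hx : x ∈ B w) : x ∉ T := fun hxT =>
  Set.disjoint_left.1 (hB.disjoint (ne_of_mem_of_not_mem hxT hw))
    (hB.branch_eq x hxT ▸ Set.mem_singleton x) hx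

theorem IsTerminalModel.exists_adj_induce_insert {B : V → Set V} (hB : IsTerminalModel G T M B)
    {w t : V} (ht : t ∈ T) (hwt : M.Adj w t) :
    ∃ x ∈ B w, (G.induce (insert t (B w))).spanningCoe.Adj x t := by
  obtain ⟨x, hx, y, hy, hxy⟩ := hB.exists_adj w t hwt
  obtain rfl : y = t := by simpa [hB.branch_eq t ht] using hy
  exact ⟨x, hx, spanningCoe_induce_adj.2 ⟨hxy, .inr hx, .inl rfl⟩⟩

theorem IsTerminalModel.exists_link_of_vertex {B : V → Set V} (hB : IsTerminalModel G T M B)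
    {w : V} (hw : w ∉ T) {a b : V} (haT : a ∈ T) (hbT : b ∈ T) (ha : M.Adj w a)
    (hb : M.Adj w b) :
    ∃ H ≤ G, H.Reachable a b ∧ elements H T ⊆ elementRegion B (.inl w) := by
  let K (t : V) : SimpleGraph V := (G.induce (insert t (B w))).spanningCoe
  have elements_subset {t : V} (ht : t ∈ T) : elements (K t) T ⊆ elementRegion B (.inl w) := by
    refine elements_subset_iff.2 fun x y hxy => ?_
    obtain ⟨hGxy, hx, hy⟩ := spanningCoe_induce_adj.1 hxy
    refine ⟨fun hxT => ⟨x, hx.resolve_left (ne_of_mem_of_not_mem ht hxT).symm, rfl⟩,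
      fun hxT hyT => (hGxy.ne ?_).elim⟩
    rw [hx.resolve_right fun h => hB.notMem_of_mem_branch hw h hxT,
      hy.resolve_right fun h => hB.notMem_of_mem_branch hw h hyT]
  obtain ⟨x, hx, hxa⟩ := hB.exists_adj_induce_insert haT ha
  obtain ⟨y, hy, hyb⟩ := hB.exists_adj_induce_insert hbT hb
  have hxy : (K a).Reachable x y :=
    reachable_of_preconnected_induce (hB.preconnected w) (Set.subset_insert a (B w)) hx hy
  refine ⟨K a ⊔ K b, sup_le (spanningCoe_induce_le G _) (spanningCoe_induce_le G _), ?_, ?_⟩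
  · exact ((hxa.symm.reachable.trans hxy).mono le_sup_left).trans (hyb.reachable.mono le_sup_right)
  · refine elements_subset_iff.2 fun x y hxy => hxy.elim (fun h => ?_) fun h => ?_
    exacts [elements_subset_iff.1 (elements_subset haT) x y h,
      elements_subset_iff.1 (elements_subset hbT) x y h]

theorem IsTerminalModel.exists_link_of_edge {B : V → Set V} (hB : IsTerminalModel G T M B)
    {a b : V} (haT : a ∈ T) (hbT : b ∈ T) (hab : M.Adj a b) :
    ∃ H ≤ G, H.Reachable a b ∧ elements H T ⊆ elementRegion B (.inr s(a, b)) := by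
  obtain ⟨x, hx, y, hy, hxy⟩ := hB.exists_adj a b hab
  obtain rfl : x = a := by simpa [hB.branch_eq a haT] using hx
  obtain rfl : y = b := by simpa [hB.branch_eq b hbT] using hy
  refine ⟨fromEdgeSet {s(x, y)}, ?_, Adj.reachable ((fromEdgeSet_adj _).2 ⟨rfl, hxy.ne⟩), ?_⟩
  · exact fun u v huv => (((fromEdgeSet_adj _).1 huv).1 ▸ hxy : s(u, v) ∈ G.edgeSet)
  · refine elements_subset_iff.2 fun u v huv => ?_
    have huv : s(u, v) = s(x, y) := ((fromEdgeSet_adj _).1 huv).1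
    refine ⟨fun hu => (hu ?_).elim, fun _ _ => congrArg _ huv⟩
    rcases Sym2.eq_iff.1 huv with ⟨rfl, -⟩ | ⟨rfl, -⟩
    exacts [haT, hbT]

theorem IsTerminalModel.exists_link [Finite V] {B : V → Set V} (hB : IsTerminalModel G T M B)
    {i : V ⊕ Sym2 V} {a b : T} (ha : a ∈ elementHyperedge M T i)
    (hb : b ∈ elementHyperedge M T i) :
    ∃ P ≤ G, P.Reachable a b ∧ elements P T ⊆ elementRegion B i ∧
      ∀ x ∉ T, (P.neighborSet x).ncard ≤ 2 := by
  have exists_connection : ∃ H ≤ G, H.Reachable a b ∧ elements H T ⊆ elementRegion B i := by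
    rcases i with w | e
    · exact hB.exists_link_of_vertex ha.1 a.2 b.2 ha.2 hb.2
    · rcases eq_or_ne a b with rfl | hab
      · exact ⟨⊥, bot_le, .rfl, elements_subset_iff.2 fun _ _ h => h.elim⟩
      · obtain ⟨rfl, hadj⟩ := adj_of_mem_elementHyperedge_inr ha hb hab
        exact hB.exists_link_of_edge a.2 b.2 hadj
  obtain ⟨H, hHG, hH, hHi⟩ := exists_connection
  obtain ⟨P, hPH, hP, hdeg⟩ := exists_le_reachable_ncard_neighborSet_le hH
  exact ⟨P, hPH.trans hHG, hP, (elements_mono hPH).trans hHi, fun x hx =>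
    hdeg x (ne_of_mem_of_not_mem a.2 hx).symm (ne_of_mem_of_not_mem b.2 hx).symm⟩

end Elements

section Packing

variable {V J : Type*} {G M : SimpleGraph V} {T : Set V}

/-- A family of pairwise element-disjoint Steiner trees in which all non-terminals have
degree 2. -/
structure IsSteinerPacking (G : SimpleGraph V) (T : Set V) (F : J → SimpleGraph V) : Prop where
  isSteinerTree : ∀ j, IsSteinerTree G T (F j)
  eDisj : ∀ i j, i ≠ j → EDisj T (F i) (F j)
  ncard_neighborSet : ∀ j, ∀ x ∈ (F j).support, x ∉ T → ((F j).neighborSet x).ncard = 2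

theorem isSteinerPacking_bot (G : SimpleGraph V) :
    IsSteinerPacking G ∅ fun _ : J => (⊥ : SimpleGraph V) where
  isSteinerTree _ := ⟨bot_le, isAcyclic_bot, by simp⟩
  eDisj _ _ _ := ⟨by simp, by simp⟩
  ncard_neighborSet _ := by simp

theorem IsSteinerPacking.comp {F : J → SimpleGraph V} (hF : IsSteinerPacking G T F)
    {J' : Type*} (f : J' ↪ J) : IsSteinerPacking G T (F ∘ f) where
  isSteinerTree j := hF.isSteinerTree (f j)
  eDisj _ _ h := hF.eDisj _ _ (f.injective.ne h)
  ncard_neighborSet j := hF.ncard_neighborSet (f j)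

theorem exists_isSteinerPacking_of_le_iSup [Finite V] {ι : Type*} {P : ι → SimpleGraph V}
    {R : ι → Set (V ⊕ Sym2 V)} {col : ι → Option J} (hP : ∀ i, P i ≤ G)
    (hPR : ∀ i, elements (P i) T ⊆ R i) (hR : Pairwise fun i i' => Disjoint (R i) (R i'))
    (hdeg : ∀ i, ∀ x ∉ T, ((P i).neighborSet x).ncard ≤ 2)
    (hT : ∀ j, ∀ s ∈ T, ∀ t ∈ T, (⨆ i : {i // col i = some j}, P i).Reachable s t) :
    ∃ F : J → SimpleGraph V, IsSteinerPacking G T F := by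
  choose F hF hFdeg using fun j => exists_isSteinerTree (hT j)
  have exists_adj (j : J) (x y : V) (hxy : (F j).Adj x y) :
      ∃ i, col i = some j ∧ (P i).Adj x y := by
    obtain ⟨⟨i, hi⟩, h⟩ := iSup_adj.1 ((hF j).1 hxy)
    exact ⟨i, hi, h⟩
  have elements_subset (j : J) : elements (F j) T ⊆ ⋃ i ∈ {i | col i = some j}, R i := by
    refine elements_subset_iff.2 fun x y hxy => ?_
    obtain ⟨i, hi, hixy⟩ := exists_adj j x y hxy
    obtain ⟨hx, hxy⟩ := elements_subset_iff.1 (hPR i) x y hixy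
    exact ⟨fun h => Set.mem_biUnion hi (hx h), fun h h' => Set.mem_biUnion hi (hxy h h')⟩
  refine ⟨F, fun j => ⟨(hF j).1.trans (iSup_le fun i => hP i), (hF j).2⟩, fun j j' hne => ?_,
    fun j x hx hxT => le_antisymm ?_ (hFdeg j x hx hxT)⟩
  · refine eDisj_of_disjoint_elements (Disjoint.mono (elements_subset j) (elements_subset j') ?_)
    simp only [Set.disjoint_iUnion_left, Set.disjoint_iUnion_right]
    exact fun i' hi' i hi => hR fun h => hne (Option.some_injective J (hi.symm.trans (h ▸ hi')))
  · obtain ⟨y, hxy⟩ := hx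
    obtain ⟨i, -, hixy⟩ := exists_adj j x y hxy
    refine (Set.ncard_le_ncard fun z hxz => ?_).trans (hdeg i x hxT)
    obtain ⟨i', -, hixz⟩ := exists_adj j x z hxz
    have hi : i = i' := by
      by_contra hne
      exact Set.disjoint_left.1 (hR hne) ((elements_subset_iff.1 (hPR i) x y hixy).1 hxT)
        ((elements_subset_iff.1 (hPR i') x z hixz).1 hxT)
    exact hi ▸ hixz

theorem IsTerminalModel.exists_isSteinerPacking [Finite V] {B : V → Set V}
    (hB : IsTerminalModel G T M B) {col : V ⊕ Sym2 V → Option J} {a b : V ⊕ Sym2 V → T}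
    (hab : ∀ i j, col i = some j → a i ∈ elementHyperedge M T i ∧ b i ∈ elementHyperedge M T i)
    (hcol : ∀ j s t, Relation.EqvGen (fun x y => ∃ i, col i = some j ∧ a i = x ∧ b i = y) s t) :
    ∃ F : J → SimpleGraph V, IsSteinerPacking G T F := by
  have exists_link (i : V ⊕ Sym2 V) : ∃ P ≤ G, elements P T ⊆ elementRegion B i ∧
      (∀ x ∉ T, (P.neighborSet x).ncard ≤ 2) ∧ ∀ j, col i = some j → P.Reachable (a i) (b i) := by
    cases hi : col i with
    | none => exact ⟨⊥, bot_le, elements_subset_iff.2 fun _ _ h => h.elim, by simp, by simp⟩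
    | some j =>
      obtain ⟨P, hPG, hP, hPi, hdeg⟩ := hB.exists_link (hab i j hi).1 (hab i j hi).2
      exact ⟨P, hPG, hPi, hdeg, fun _ _ => hP⟩
  choose P hPG hPi hdeg hP using exists_link
  refine exists_isSteinerPacking_of_le_iSup hPG hPi hB.pairwise_disjoint_elementRegion hdeg
    (col := col) fun j s hs t ht => ?_
  have reachable (s t : T) : (⨆ i : {i // col i = some j}, P i).Reachable (s : V) t := by
    induction hcol j s t with
    | rel _ _ h =>
      obtain ⟨i, hi, rfl, rfl⟩ := h
      exact (hP i j hi).mono (le_iSup (fun i : {i // col i = some j} => P i) ⟨i, hi⟩)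
    | refl => rfl
    | symm _ _ _ ih => exact ih.symm
    | trans _ _ _ _ _ ih ih' => exact ih.trans ih'
  exact reachable ⟨s, hs⟩ ⟨t, ht⟩

end Packing

/-- It suffices to exclude a `K₅` minor, and the number of trees can be increased. -/
theorem planar_steiner_tree_packing_general {V : Type*} [Finite V] (G : SimpleGraph V)
    (T : Set V) (hK5 : ¬ HasMinor G (completeGraph (Fin 5))) (k : ℕ)
    (hconn : ∀ u ∈ T, ∀ v ∈ T, u ≠ v → k ≤ elemConn G T u v) :
    ∃ F : Fin (k / 3 - 1) → SimpleGraph V, IsSteinerPacking G T F := by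
  rcases T.eq_empty_or_nonempty with rfl | hT
  · exact ⟨_, isSteinerPacking_bot G⟩
  have : Nonempty T := hT.to_subtype
  obtain ⟨M, B, hB, hM, hind⟩ := (isElementConnected_of_le_elemConn hconn).exists_isTerminalModel
  rcases exists_connected_colors_or_exists_lt_mul_card_quot (J := Fin (k / 3 - 1))
    (elementHyperedge M T) with ⟨col, a, b, hab, hcol⟩ | ⟨A, hA⟩
  · exact hB.exists_isSteinerPacking hab hcol
  · have hM5 : ¬ HasMinor M (completeGraph (Fin 5)) := fun h =>
      hK5 (hB.hasMinor_completeGraph_of_hasMinor h)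
    rw [Nat.card_fin] at hA
    exact (hA.not_ge (hM.mul_card_quot_le hind hM5 le_rfl A)).elim

/-- **Packing Steiner trees in planar graphs.** If every pair of terminals of a planar
graph `G` is `k`-element-connected, then `G` contains at least `⌈k/5⌉ - 1` pairwise
element-disjoint Steiner trees, in each of which every non-terminal vertex has
degree exactly 2. -/
theorem planar_steiner_tree_packing {V : Type*} [Fintype V]
    (G : SimpleGraph V) (T : Set V) (hplanar : IsPlanar G) (k : ℕ)
    (hconn : ∀ u ∈ T, ∀ v ∈ T, u ≠ v → k ≤ elemConn G T u v) :
    ∃ F : Fin ((k + 4) / 5 - 1) → SimpleGraph V,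
      (∀ j, IsSteinerTree G T (F j)) ∧
      (∀ i j, i ≠ j → EDisj T (F i) (F j)) ∧
      (∀ j, ∀ x ∈ (F j).support, x ∉ T → ((F j).neighborSet x).ncard = 2) := by
  obtain ⟨F, hF⟩ := planar_steiner_tree_packing_general G T hplanar.1 k hconn
  have hle : (k + 4) / 5 - 1 ≤ k / 3 - 1 := by omega
  obtain ⟨hsteiner, hdisj, hdeg⟩ := hF.comp (Fin.castLEEmb hle)
  exact ⟨_, hsteiner, hdisj, hdeg⟩
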